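/- The map B_0 : DEnd_0(n) → LDO(n), B_0(f) := f_0, maps the space Z_0(DEnd(n)) of 0-cycles (elements f with δf = 0) onto the kernel of a_0, i.e. B_0(Z_0(DEnd(n))) = {A ∈ LDO(n) : χ(A ∘ d/dx^i_j) = 0 for all 1 ≤ i ≤ N, 1 ≤ j ≤ n}. -/

import Mathlib

/-!
Local functions form a commutative ring `Loc N` on which the total derivatives `d/dx^i` act as
commuting derivations, and `LDO(n)` is modelled by the space `PL N n` of maps
`Loc(E)^n → Loc(E)` that are locally finite sums of polarized monomials
`c (d/dx)^K ∏_j P_j f_j`. It is filtered by the vertical degree `Σ_j deg_f(α_j)` (`Fk`), and a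
monomial of large vertical degree vanishes on tuples of bounded jet order, so that such sums make
sense and linear maps which almost respect the filtration extend to them (`PL_map`). Write `L_i` for
postcomposition with `d/dx^i` and `R_{i,j}` for precomposition with `d/dx^i` in the `j`-th argument.

*The characteristic.* Integration by parts shows that `A` and `χ(A)` differ by an element of
`Σ_i im L_i`, while `χ` annihilates `im L_i`. Hence `χ(A) = 0` if and only if `A = Σ_i L_i A_i` for
some `A_i ∈ LDO(n)` (`chiZero_iff`), and the kernel of `a_0` consists of the `A` for which all
`R_{i,j} A` lie in `Σ_i im L_i`.

*Acyclicity.* For a fixed source form, the matrix entries of an element of `DEnd(n)` form an element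
of the Koszul complex of the commuting operators `L_i` on `LDO(n)`. Let `E_i` be the commutator with
multiplication by `x^i` in the first argument. Then `[E_i, L_l] = δ_{il}`, and `E_i` is nilpotent on
tuples of bounded jet order. By these Weyl algebra relations
`G_i = Σ_k (-1)^k / (k+1)! L_i^k E_i^{k+1}` satisfies `G_i L_i = 1` and commutes with `L_l`, `l ≠ i`
(`oG_oL_self`, `oG_oL`). So each `G_i` contracts the Koszul complex away from the words containing
`dx^i`, and a closed form is exact as soon as its top coefficient lies in `Σ_i im L_i`
(`koszul_exact`).

*The theorem.* If all `R_{i,j} A` lie in `Σ_i im L_i`, a chain map with degree zero component `A` is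
constructed degree by degree, the obstruction `f_s ∘ d_H` being closed and hence exact
(`exists_chain`). Conversely, the degree one part of a chain map presents `R_{i,j} f_0` as a sum of
total derivatives (`pR_mem_of_chain`).
-/

open scoped BigOperators

namespace JetBundle

/-- Multi-indices `J = (j_1,…,j_N)`. -/
abbrev MI (N : ℕ) := Fin N → ℕ

/-- A point of the infinite jet bundle `J^∞E`, with coordinates `(x^i, u_J)`. -/
abbrev JetPt (N : ℕ) := (Fin N → ℝ) × (MI N → ℝ)

/-- Real-valued functions on the infinite jet bundle. -/
abbrev Fn (N : ℕ) := JetPt N → ℝ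

/-- Partial derivative with respect to the base coordinate `x^i`. -/
noncomputable def pderivX {N : ℕ} (i : Fin N) (f : Fn N) : Fn N :=
  fun p => deriv (fun t => f (Function.update p.1 i t, p.2)) (p.1 i)

/-- Partial derivative with respect to the jet coordinate `u_J`. -/
noncomputable def pderivU {N : ℕ} (J : MI N) (f : Fn N) : Fn N :=
  fun p => deriv (fun t => f (p.1, Function.update p.2 J t)) (p.2 J)

/-- `iJ` : the multi-index `J` with its `i`-th entry increased by `1`. -/
def inc {N : ℕ} (i : Fin N) (J : MI N) : MI N := Function.update J i (J i + 1)

/-- The total derivative `d/dx^i = ∂/∂x^i + Σ_J u_{iJ} ∂/∂u_J`. -/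
noncomputable def Dtot {N : ℕ} (i : Fin N) (f : Fn N) : Fn N :=
  fun p => pderivX i f p + ∑' J : MI N, p.2 (inc i J) * pderivU J f p

/-- Iterated total derivative `(d/dx)^I`. -/
noncomputable def DPow {N : ℕ} (I : MI N) : Fn N → Fn N :=
  (List.finRange N).foldr (fun i g => (Dtot i)^[I i] ∘ g) id

/-- Iterated vertical derivative `(∂/∂u)^α` for a finitely supported exponent `α`. -/
noncomputable def UPow {N : ℕ} (α : MI N →₀ ℕ) : Fn N → Fn N :=
  α.support.toList.foldr (fun J g => (pderivU J)^[α J] ∘ g) id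

/-- A local function: a smooth function of the base coordinates and
finitely many jet coordinates `u_J`. -/
def IsLocal {N : ℕ} (f : Fn N) : Prop :=
  ∃ (S : Finset (MI N)) (g : ((Fin N → ℝ) × (↥S → ℝ)) → ℝ),
    ContDiff ℝ (⊤ : ℕ∞) g ∧ ∀ p : JetPt N, f p = g (p.1, fun J => p.2 J.1)

/-- The formal differential degree of an exponent `α`: the maximal `|J|` with `α J ≠ 0`. -/
def degf {N : ℕ} (α : MI N →₀ ℕ) : ℕ := α.support.sup fun J => ∑ i, J i

/-- Index type for the coefficients of an `n`-multilinear local differential operator: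
a tuple of multi-indices `(I_1,…,I_n)` and vertical exponents `(α_1,…,α_n)`. -/
abbrev Idx (N n : ℕ) := (Fin n → MI N) × (Fin n → (MI N →₀ ℕ))

/-- Coefficient data of an `n`-multilinear local differential operator. -/
abbrev OpData (N n : ℕ) := Idx N n → Fn N

/-- `n`-multilinear operators on functions on the jet bundle. -/
abbrev Op (N n : ℕ) := (Fin n → Fn N) → Fn N

/-- An `n`-tuple of local functions. -/
def LocalTuple {N n : ℕ} (f : Fin n → Fn N) : Prop := ∀ j, IsLocal (f j)

/-- Coefficient data is admissible if all coefficients are local functions and, for each `m`,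
only finitely many coefficients with `Σ_j deg_f(α_j) ≤ m` are nonzero. -/
def Good {N n : ℕ} (q : OpData N n) : Prop :=
  (∀ Iα, IsLocal (q Iα)) ∧
    ∀ m : ℕ, {Iα : Idx N n | q Iα ≠ 0 ∧ ∑ j, degf (Iα.2 j) ≤ m}.Finite

/-- The (unpolarized) realization of coefficient data:
`A(f_1,…,f_n) = Σ p_{I,α} Π_j (d/dx)^{I_j} (∂/∂u)^{α_j} f_j`. -/
noncomputable def realizeU {N n : ℕ} (q : OpData N n) (f : Fin n → Fn N) : Fn N :=
  fun pt => ∑' Iα : Idx N n, q Iα pt * ∏ j, DPow (Iα.1 j) (UPow (Iα.2 j) (f j)) pt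

/-- The polarized realization of coefficient data: the slot `I_1` records powers of
`d/dy_1 = Σ_j d/dx_j`, i.e. total derivatives applied to the whole product, while for `j ≥ 2`
the slot `I_j` records powers of `d/dy_j = d/dx_j` acting on the `j`-th argument:
`A(f_1,…,f_n) = Σ q_{I;α} (d/dx)^{I_1} [ (∂/∂u)^{α_1}f_1 · Π_{j≥2} (d/dx)^{I_j}(∂/∂u)^{α_j} f_j ]`. -/
noncomputable def realizeP {N n : ℕ} [NeZero n] (q : OpData N n) (f : Fin n → Fn N) : Fn N :=
  fun pt => ∑' Iα : Idx N n, q Iα pt *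
    DPow (Iα.1 0) (fun p => ∏ j,
      if j = (0 : Fin n) then UPow (Iα.2 j) (f j) p
      else DPow (Iα.1 j) (UPow (Iα.2 j) (f j)) p) pt

/-- The characteristic, on polarized coefficient data:
`χ(q)_{(0,I_2,…,I_n);α} := Σ_{I_1} (−1)^{|I_1|} (d/dx)^{I_1} q_{I_1,I_2,…,I_n;α}`. -/
noncomputable def chiData {N n : ℕ} [NeZero n] (q : OpData N n) : OpData N n :=
  fun Iα =>
    if Iα.1 0 = 0 then
      fun pt => ∑' K : MI N,
        (-1 : ℝ) ^ (∑ i, K i) * DPow K (q (Function.update Iα.1 0 K, Iα.2)) pt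
    else 0

/-- `q` is a polarized presentation of the operator `A` (on local functions). -/
def Presents {N n : ℕ} [NeZero n] (q : OpData N n) (A : Op N n) : Prop :=
  ∀ f, LocalTuple f → ∀ pt, A f pt = realizeP q f pt

/-- `A` is an `n`-multilinear local differential operator (unpolarized form). -/
def IsLDO {N n : ℕ} (A : Op N n) : Prop :=
  ∃ q : OpData N n, Good q ∧ ∀ f, LocalTuple f → ∀ pt, A f pt = realizeU q f pt

/-- `A` is an `n`-multilinear local differential operator, given by a polarized presentation. -/
def IsPLDO {N n : ℕ} [NeZero n] (A : Op N n) : Prop :=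
  ∃ q : OpData N n, Good q ∧ Presents q A

/-- `A` is an `n`-multilinear local differential operator with vanishing characteristic. -/
def ChiZero {N n : ℕ} [NeZero n] (A : Op N n) : Prop :=
  ∃ q : OpData N n, Good q ∧ Presents q A ∧
    ∀ f, LocalTuple f → ∀ pt, realizeP (chiData q) f pt = 0

/-- Precomposition `A ∘ d/dx^i_j` with the total derivative acting on the `j`-th argument. -/
noncomputable def precompD {N n : ℕ} (A : Op N n) (i : Fin N) (j : Fin n) : Op N n :=
  fun f => A (Function.update f j (Dtot i (f j)))

/-- A horizontal form, recorded by its coefficients on the basis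
`(dx)^ε = (dx^1)^{ε^1} ∧ ⋯ ∧ (dx^N)^{ε^N}`, `ε : Fin N → Bool`. -/
abbrev Form (N : ℕ) := (Fin N → Bool) → Fn N

/-- The form-degree `|ε|`. -/
def wt {N : ℕ} (ε : Fin N → Bool) : ℕ := ∑ i, if ε i then 1 else 0

/-- The sign exponent: the number of entries of `ε` below `i` which are set. -/
def pos {N : ℕ} (i : Fin N) (ε : Fin N → Bool) : ℕ := ∑ l, if l < i ∧ ε l then 1 else 0

/-- The horizontal differential `d_H ω = Σ_i dx^i ∧ (d/dx^i) ω`. -/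
noncomputable def dH {N : ℕ} (ω : Form N) : Form N :=
  fun δ pt => ∑ i : Fin N,
    if δ i then (-1 : ℝ) ^ pos i δ * Dtot i (ω (Function.update δ i false)) pt else 0

/-- A matrix of operators acting on horizontal forms (linear case). -/
abbrev FormOp (N : ℕ) := (Fin N → Bool) → (Fin N → Bool) → (Fn N → Fn N)

/-- Application of a matrix of operators to a form. -/
noncomputable def applyFO {N : ℕ} (M : FormOp N) (ω : Form N) : Form N :=
  fun δ pt => ∑ ε : Fin N → Bool, M ε δ (ω ε) pt

/-- A degree element of `DEnd(n)`: a matrix indexed by basis multidegrees of the inputs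
`(ε_1,…,ε_n)` and of the output `δ`, with `n`-multilinear operator entries. -/
abbrev DMat (N n : ℕ) := (Fin n → (Fin N → Bool)) → (Fin N → Bool) → Op N n

/-- All matrix entries are local differential operators. -/
def LDOMat {N n : ℕ} [NeZero n] (F : DMat N n) : Prop := ∀ εs δ, IsPLDO (F εs δ)

/-- `F` represents a degree-`k` map of the regraded horizontal complexes
(`Ω_i := Ω^{N−i,0}`): the entry at `(ε⃗, δ)` vanishes unless
`N − wt δ = k + Σ_j (N − wt ε_j)`. -/
def GradedMat {N n : ℕ} (k : ℤ) (F : DMat N n) : Prop :=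
  ∀ εs δ, F εs δ ≠ 0 → (wt δ : ℤ) = (N : ℤ) - k - ∑ j, ((N : ℤ) - (wt (εs j) : ℤ))

/-- The differential `(δf)_s = d_H f_s − (−1)^k f_{s−1} d_H^{⊗n}` of the complex `DEnd_*(n)`,
written out on matrix entries. -/
noncomputable def deltaMat {N n : ℕ} (k : ℤ) (F : DMat N n) : DMat N n :=
  fun εs δ g =>
    (fun pt => ∑ i : Fin N,
      if δ i then (-1 : ℝ) ^ pos i δ * Dtot i (F εs (Function.update δ i false) g) pt else 0)
    -
    ((-1 : ℝ) ^ k) • (fun pt => ∑ j : Fin n, ∑ i : Fin N,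
      if εs j i = false then
        (-1 : ℝ) ^ ((∑ l ∈ Finset.univ.filter fun l => l < j, wt (εs l)) + pos i (εs j)) *
          F (Function.update εs j (Function.update (εs j) i true)) δ
            (Function.update g j (Dtot i (g j))) pt
      else 0)

/-- A matrix of operators vanishes (on local arguments). -/
def MatZeroLoc {N n : ℕ} (F : DMat N n) : Prop :=
  ∀ εs δ g, LocalTuple g → ∀ pt, F εs δ g pt = 0

/-- Two matrices of operators agree (on local arguments). -/
def MatEqLoc {N n : ℕ} (F G : DMat N n) : Prop :=
  ∀ εs δ g, LocalTuple g → ∀ pt, F εs δ g pt = G εs δ g pt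

/-- The projection `B_0 : DEnd_0(n) → LDO(n)`, i.e. the component `f_0` on the identifications
`[(Ω_*)^{⊗n}]_0 ≅ Loc(E)^{⊗n}`, `Ω_0 ≅ Loc(E)`. -/
def B0 {N n : ℕ} (F : DMat N n) : Op N n := F (fun _ _ => true) fun _ => true

/-- A form with coefficients in `LDO(n)`: an element of the operator complex `O^*(n)`. -/
abbrev OForm (N n : ℕ) := (Fin N → Bool) → Op N n

/-- The differential of the operator complex: `d(A (dx)^ε) = Σ_i (d/dx^i ∘ A) dx^i ∧ (dx)^ε`. -/
noncomputable def dO {N n : ℕ} (ω : OForm N n) : OForm N n :=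
  fun δ g pt => ∑ i : Fin N,
    if δ i then (-1 : ℝ) ^ pos i δ * Dtot i (ω (Function.update δ i false) g) pt else 0

/-- An element of `O^*(n)` concentrated in degree `k`. -/
def OGraded {N n : ℕ} (k : ℕ) (ω : OForm N n) : Prop := ∀ δ, ω δ ≠ 0 → wt δ = k

/-- All coefficients are local differential operators. -/
def OLDO {N n : ℕ} [NeZero n] (ω : OForm N n) : Prop := ∀ δ, IsPLDO (ω δ)

/-- An element of `O^*(n)` vanishes on local arguments. -/
def OZeroLoc {N n : ℕ} (ω : OForm N n) : Prop :=
  ∀ δ g, LocalTuple g → ∀ pt, ω δ g pt = 0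

/-- Two elements of `O^*(n)` agree on local arguments. -/
def OEqLoc {N n : ℕ} (ω η : OForm N n) : Prop :=
  ∀ δ g, LocalTuple g → ∀ pt, ω δ g pt = η δ g pt

/-- The Euler operator `E(L dx^1∧⋯∧dx^N) = Σ_I (−1)^{|I|} (d/dx)^I (∂L/∂u_I)`. -/
noncomputable def Euler {N : ℕ} (L : Fn N) : Fn N :=
  fun pt => ∑' I : MI N, (-1 : ℝ) ^ (∑ i, I i) * DPow I (pderivU I L) pt

end JetBundle

/-! ### Local functions and total derivatives -/

namespace JetBundle
variable {N : ℕ}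

/-- The partial derivative along a base coordinate `x^i` or a jet coordinate `u_J`. -/
noncomputable def pd (c : Fin N ⊕ MI N) : Fn N → Fn N :=
  match c with
  | .inl i => pderivX i
  | .inr J => pderivU J

/-- The projection of a jet onto its base point and the jet coordinates `u_J` with `J ∈ S`. -/
def pr (S : Finset (MI N)) (p : JetPt N) : (Fin N → ℝ) × (↥S → ℝ) := (p.1, fun J => p.2 J.1)

open Classical in
/-- The coordinate direction of `x^i` or `u_J` in the finite-dimensional space of coordinates indexed
by `S`; it is zero for `u_J` with `J ∉ S`. -/
noncomputable def vec (S : Finset (MI N)) (c : Fin N ⊕ MI N) : (Fin N → ℝ) × (↥S → ℝ) :=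
  match c with
  | .inl i => (Pi.single i 1, 0)
  | .inr J => if h : J ∈ S then (0, Pi.single ⟨J, h⟩ 1) else 0

/-- `f` is the smooth function `g` of the base point and of the finitely many jet coordinates `u_J`,
`J ∈ S`. Unlike in `IsLocal`, the data `S` and `g` are kept, so that partial derivatives of `f` are
values of the Fréchet derivative of `g`. -/
structure Rep (S : Finset (MI N)) (g : ((Fin N → ℝ) × (↥S → ℝ)) → ℝ) (f : Fn N) : Prop where
  smooth : ContDiff ℝ (⊤ : ℕ∞) g
  eq : ∀ p, f p = g (pr S p)

theorem isLocal_iff {f : Fn N} : IsLocal f ↔ ∃ S g, Rep S g f :=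
  ⟨fun ⟨S, g, h, e⟩ => ⟨S, g, h, e⟩, fun ⟨S, g, h⟩ => ⟨S, g, h.1, h.2⟩⟩

theorem Rep.diff {S : Finset (MI N)} {g} {f : Fn N} (h : Rep S g f) : Differentiable ℝ g :=
  h.smooth.differentiable (by simp)

theorem Rep.pd_eq {S : Finset (MI N)} {g} {f : Fn N} (h : Rep S g f) (c : Fin N ⊕ MI N)
    (p : JetPt N) : pd c f p = fderiv ℝ g (pr S p) (vec S c) := by
  have key : ∀ (t₀ : ℝ) (w : (Fin N → ℝ) × (↥S → ℝ)),
      deriv (fun t => g (pr S p + (t - t₀) • w)) t₀ = fderiv ℝ g (pr S p) w := by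
    intro t₀ w
    have h1 : HasDerivAt (fun t : ℝ => pr S p + (t - t₀) • w) w t₀ := by
      have := (((hasDerivAt_id t₀).sub_const t₀).smul_const w).const_add (pr S p)
      simpa using this
    have h2 : HasFDerivAt g (fderiv ℝ g (pr S p)) (pr S p + (t₀ - t₀) • w) := by
      simpa using (h.diff (pr S p)).hasFDerivAt
    exact (h2.comp_hasDerivAt t₀ h1).deriv
  match c with
  | .inl i =>
    have : (fun t => f (Function.update p.1 i t, p.2)) =
        fun t => g (pr S p + (t - p.1 i) • vec S (.inl i)) := by
      funext t
      rw [h.eq]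
      congr 1
      refine Prod.ext ?_ ?_
      · funext l
        by_cases hl : l = i
        · subst hl; simp [pr, vec]
        · simp [pr, vec, hl]
      · simp [pr, vec]
    simp only [pd, pderivX, this]
    exact key _ _
  | .inr J =>
    have : (fun t => f (p.1, Function.update p.2 J t)) =
        fun t => g (pr S p + (t - p.2 J) • vec S (.inr J)) := by
      funext t
      rw [h.eq]
      congr 1
      by_cases hJ : J ∈ S
      · refine Prod.ext ?_ ?_
        · simp [pr, vec, hJ]
        · funext l
          by_cases hl : l = ⟨J, hJ⟩
          · subst hl; simp [pr, vec, hJ]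
          · have hl' : l.1 ≠ J := fun h => hl (Subtype.ext h)
            simp [pr, vec, hJ, hl, hl']
      · refine Prod.ext ?_ ?_
        · simp [pr, vec, hJ]
        · funext l
          have hl' : l.1 ≠ J := fun h => hJ (h ▸ l.2)
          simp [pr, vec, hJ, hl']
    simp only [pd, pderivU, this]
    exact key _ _

theorem Rep.pd {S : Finset (MI N)} {g} {f : Fn N} (h : Rep S g f) (c : Fin N ⊕ MI N) :
    Rep S (fun y => fderiv ℝ g y (vec S c)) (pd c f) :=
  ⟨(h.smooth.fderiv_right (m := (⊤ : ℕ∞)) (by simp)).clm_apply contDiff_const,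
    fun p => h.pd_eq c p⟩

theorem Rep.mono {S S' : Finset (MI N)} {g} {f : Fn N} (h : Rep S g f) (hS : S ⊆ S') :
    ∃ g', Rep S' g' f := by
  refine ⟨fun y => g (y.1, fun J => y.2 ⟨J.1, hS J.2⟩), ?_, fun p => h.eq p⟩
  apply h.smooth.comp
  fun_prop

theorem IsLocal.common {f f' : Fn N} (h : IsLocal f) (h' : IsLocal f') :
    ∃ S g g', Rep S g f ∧ Rep S g' f' := by
  classical
  obtain ⟨S, g, hg⟩ := isLocal_iff.1 h
  obtain ⟨S', g', hg'⟩ := isLocal_iff.1 h'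
  obtain ⟨k, hk⟩ := hg.mono (S' := S ∪ S') Finset.subset_union_left
  obtain ⟨k', hk'⟩ := hg'.mono (S' := S ∪ S') Finset.subset_union_right
  exact ⟨_, _, _, hk, hk'⟩

theorem Rep.add {S : Finset (MI N)} {g g'} {f f' : Fn N} (h : Rep S g f) (h' : Rep S g' f') :
    Rep S (g + g') (f + f') :=
  ⟨h.smooth.add h'.smooth, fun p => by simp [h.eq, h'.eq]⟩

theorem Rep.mul {S : Finset (MI N)} {g g'} {f f' : Fn N} (h : Rep S g f) (h' : Rep S g' f') :
    Rep S (g * g') (f * f') :=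
  ⟨h.smooth.mul h'.smooth, fun p => by simp [h.eq, h'.eq]⟩

theorem rep_const (S : Finset (MI N)) (a : ℝ) : Rep S (fun _ => a) (fun _ => a : Fn N) :=
  ⟨contDiff_const, fun _ => rfl⟩

/-- The algebra `Loc(E)` of local functions. -/
noncomputable def locAlg (N : ℕ) : Subalgebra ℝ (Fn N) where
  carrier := {f | IsLocal f}
  mul_mem' {a b} ha hb := by
    obtain ⟨S, g, g', h, h'⟩ := IsLocal.common ha hb
    exact isLocal_iff.2 ⟨_, _, h.mul h'⟩
  add_mem' {a b} ha hb := by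
    obtain ⟨S, g, g', h, h'⟩ := IsLocal.common ha hb
    exact isLocal_iff.2 ⟨_, _, h.add h'⟩
  algebraMap_mem' r := isLocal_iff.2 ⟨∅, _, rep_const ∅ r⟩

/-- The type of local functions, with its ring structure sealed off from `Fn N`. -/
def Loc (N : ℕ) : Type := ↥(locAlg N)

noncomputable instance : CommRing (Loc N) := inferInstanceAs (CommRing ↥(locAlg N))
noncomputable instance : Algebra ℝ (Loc N) := inferInstanceAs (Algebra ℝ ↥(locAlg N))

/-- The function underlying a local function. -/
def Loc.val (f : Loc N) : Fn N := Subtype.val (p := fun f => f ∈ locAlg N) f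

/-- A function satisfying `IsLocal`, as an element of `Loc(E)`. -/
def Loc.mk (f : Fn N) (h : IsLocal f) : Loc N := (⟨f, h⟩ : ↥(locAlg N))

instance : CoeOut (Loc N) (Fn N) := ⟨Loc.val⟩

theorem Loc.ext {f g : Loc N} (h : (f : Fn N) = g) : f = g := Subtype.ext h

theorem Loc.prop (f : Loc N) : IsLocal (f : Fn N) := Subtype.property (p := fun f => f ∈ locAlg N) f

@[simp] theorem Loc.val_mk (f : Fn N) (h : IsLocal f) : (Loc.mk f h : Fn N) = f := rfl
@[simp] theorem Loc.val_zero : ((0 : Loc N) : Fn N) = 0 := rfl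
@[simp] theorem Loc.val_one : ((1 : Loc N) : Fn N) = 1 := rfl

/-- The inclusion of local functions into all functions. -/
noncomputable def locVal (N : ℕ) : Loc N →ₐ[ℝ] Fn N := (locAlg N).val

theorem locVal_apply (f : Loc N) : locVal N f = (f : Fn N) := rfl

theorem pd_mem (c : Fin N ⊕ MI N) (f : Loc N) : IsLocal (pd c (f : Fn N)) := by
  obtain ⟨S, g, h⟩ := isLocal_iff.1 f.prop
  exact isLocal_iff.2 ⟨_, _, h.pd c⟩

theorem pd_add (c : Fin N ⊕ MI N) (f f' : Loc N) :
    pd c ((f : Fn N) + f') = pd c (f : Fn N) + pd c (f' : Fn N) := by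
  obtain ⟨S, g, g', h, h'⟩ := IsLocal.common f.prop f'.prop
  funext p
  rw [(h.add h').pd_eq, Pi.add_apply, h.pd_eq, h'.pd_eq, fderiv_add (h.diff _) (h'.diff _)]
  rfl

theorem pd_mul (c : Fin N ⊕ MI N) (f f' : Loc N) :
    pd c ((f : Fn N) * f') = (f : Fn N) * pd c (f' : Fn N) + f' * pd c (f : Fn N) := by
  obtain ⟨S, g, g', h, h'⟩ := IsLocal.common f.prop f'.prop
  funext p
  rw [(h.mul h').pd_eq, Pi.add_apply, Pi.mul_apply, Pi.mul_apply, h.pd_eq, h'.pd_eq,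
    fderiv_mul (h.diff _) (h'.diff _), h.eq, h'.eq]
  simp

theorem pd_const (c : Fin N ⊕ MI N) (a : ℝ) : pd c (fun _ => a : Fn N) = 0 := by
  funext p
  rw [(rep_const ∅ a).pd_eq]
  simp

/-- Mixed partial derivatives commute: this is the symmetry of the second Fréchet derivative of the
function of finitely many variables representing `f`. -/
theorem pd_comm (c c' : Fin N ⊕ MI N) (f : Loc N) :
    pd c (pd c' (f : Fn N)) = pd c' (pd c (f : Fn N)) := by
  obtain ⟨S, g, h⟩ := isLocal_iff.1 f.prop
  have hd : Differentiable ℝ (fderiv ℝ g) :=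
    (h.smooth.fderiv_right (m := (⊤ : ℕ∞)) (by simp)).differentiable (by simp)
  funext p
  rw [(h.pd c').pd_eq, (h.pd c).pd_eq]
  have key : ∀ v w : (Fin N → ℝ) × (↥S → ℝ), fderiv ℝ (fun y => fderiv ℝ g y v) (pr S p) w
      = fderiv ℝ (fderiv ℝ g) (pr S p) w v := by
    intro v w
    rw [fderiv_clm_apply (hd _) (by fun_prop)]
    simp
  rw [key, key]
  have hs : IsSymmSndFDerivAt ℝ g (pr S p) := by
    apply h.smooth.contDiffAt.isSymmSndFDerivAt
    simp only [minSmoothness_of_isRCLikeNormedField]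
    exact WithTop.coe_le_coe.2 (le_top : (2 : ℕ∞) ≤ ⊤)
  exact hs _ _

/-- Coordinate vector fields, as derivations of `Loc(E)`. -/
noncomputable def dC (c : Fin N ⊕ MI N) : Derivation ℝ (Loc N) (Loc N) :=
  Derivation.mk'
    { toFun := fun f => Loc.mk (pd c f) (pd_mem c f)
      map_add' := fun f f' => Loc.ext (pd_add c f f')
      map_smul' := fun r f => Loc.ext (by
        have h1 : ((r • f : Loc N) : Fn N) = ((algebraMap ℝ (Loc N) r : Loc N) : Fn N) * f := by
          rw [Algebra.smul_def]; rfl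
        have h2 : pd c ((algebraMap ℝ (Loc N) r : Loc N) : Fn N) = 0 := pd_const c r
        change pd c ((r • f : Loc N) : Fn N) = r • pd c (f : Fn N)
        rw [h1, pd_mul, h2, mul_zero, add_zero]
        rfl) }
    (fun f f' => Loc.ext (pd_mul c f f'))

theorem dC_coe (c : Fin N ⊕ MI N) (f : Loc N) : ((dC c f : Loc N) : Fn N) = pd c f := rfl

theorem dC_comm (c c' : Fin N ⊕ MI N) (f : Loc N) : dC c (dC c' f) = dC c' (dC c f) :=
  Loc.ext (pd_comm c c' f)

/-- `∂/∂x^i` on `Loc(E)`. -/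
noncomputable abbrev dX (i : Fin N) : Derivation ℝ (Loc N) (Loc N) := dC (.inl i)
/-- `∂/∂u_J` on `Loc(E)`. -/
noncomputable abbrev dU (J : MI N) : Derivation ℝ (Loc N) (Loc N) := dC (.inr J)

/-- The base coordinate `x^i`. -/
noncomputable def cX (i : Fin N) : Loc N :=
  ⟨fun p => p.1 i, isLocal_iff.2 ⟨∅, fun y => y.1 i, by fun_prop, fun _ => rfl⟩⟩

/-- The jet coordinate `u_J`. -/
noncomputable def cU (J : MI N) : Loc N :=
  ⟨fun p => p.2 J, isLocal_iff.2 ⟨{J}, fun y => y.2 ⟨J, by simp⟩, by fun_prop, fun _ => rfl⟩⟩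

theorem dX_cX (i l : Fin N) : dX i (cX l) = if i = l then 1 else 0 := by
  apply Loc.ext
  funext p
  change deriv (fun t => Function.update p.1 i t l) (p.1 i) = _
  by_cases h : i = l
  · subst h; simp
  · simp [Function.update_of_ne (Ne.symm h), h]

theorem dX_cU (i : Fin N) (J : MI N) : dX i (cU J) = 0 := by
  apply Loc.ext
  funext p
  change deriv (fun t => p.2 J) (p.1 i) = _
  simp

theorem dU_cX (J : MI N) (i : Fin N) : dU J (cX i) = 0 := by
  apply Loc.ext
  funext p
  change deriv (fun t => p.1 i) (p.2 J) = _
  simp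

theorem dU_cU (J K : MI N) : dU J (cU K) = if J = K then 1 else 0 := by
  apply Loc.ext
  funext p
  change deriv (fun t => Function.update p.2 J t K) (p.2 J) = _
  by_cases h : J = K
  · subst h; simp
  · simp [Function.update_of_ne (Ne.symm h), h]

theorem exists_supp (f : Loc N) : ∃ S : Finset (MI N), ∀ J, J ∉ S → dU J f = 0 := by
  obtain ⟨S, g, h⟩ := isLocal_iff.1 f.prop
  refine ⟨S, fun J hJ => Loc.ext (funext fun p => ?_)⟩
  rw [dC_coe, h.pd_eq]
  simp [vec, hJ]

/-- The infinite sum in `Dtot` reduces to a finite one on a local function. -/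
theorem Dtot_eq {f : Loc N} {S : Finset (MI N)} (hS : ∀ J, J ∉ S → dU J f = 0) (i : Fin N) :
    Dtot i (f : Fn N) = ((dX i f + ∑ J ∈ S, cU (inc i J) * dU J f : Loc N) : Fn N) := by
  funext p
  have : ∀ J, J ∉ S → p.2 (inc i J) * pderivU J (f : Fn N) p = 0 := by
    intro J hJ
    have := congrFun (congrArg Loc.val (hS J hJ)) p
    have h2 : pderivU J (f : Fn N) p = 0 := this
    simp [h2]
  rw [Dtot, tsum_eq_sum (fun J hJ => this J hJ)]
  rw [← locVal_apply (dX i f + _)]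
  simp only [map_add, map_sum, map_mul, Pi.add_apply, Finset.sum_apply, Pi.mul_apply]
  rfl

theorem Dtot_mem (i : Fin N) (f : Loc N) : IsLocal (Dtot i (f : Fn N)) := by
  obtain ⟨S, hS⟩ := exists_supp f
  rw [Dtot_eq hS]
  exact Loc.prop _

/-- The total derivative as a map of `Loc(E)`. -/
noncomputable def tD (i : Fin N) (f : Loc N) : Loc N := Loc.mk (Dtot i f) (Dtot_mem i f)

theorem tD_eq {f : Loc N} {S : Finset (MI N)} (hS : ∀ J, J ∉ S → dU J f = 0) (i : Fin N) :
    tD i f = dX i f + ∑ J ∈ S, cU (inc i J) * dU J f := Loc.ext (Dtot_eq hS i)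

/-- The total derivative `d/dx^i` as a derivation of `Loc(E)`. -/
noncomputable def dD (i : Fin N) : Derivation ℝ (Loc N) (Loc N) :=
  Derivation.mk'
    { toFun := tD i
      map_add' := fun f f' => by
        classical
        obtain ⟨S, hS⟩ := exists_supp f
        obtain ⟨S', hS'⟩ := exists_supp f'
        rw [tD_eq (S := S ∪ S') (fun J hJ => hS J (by simp_all)),
          tD_eq (S := S ∪ S') (fun J hJ => hS' J (by simp_all)),
          tD_eq (S := S ∪ S') (fun J hJ => by
            rw [map_add, hS J (by simp_all), hS' J (by simp_all), add_zero])]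
        simp only [map_add, mul_add, Finset.sum_add_distrib]
        ring
      map_smul' := fun r f => by
        obtain ⟨S, hS⟩ := exists_supp f
        rw [tD_eq hS, tD_eq (S := S) (fun J hJ => by rw [Derivation.map_smul, hS J hJ, smul_zero])]
        simp [Finset.smul_sum] }
    (fun f f' => by
        classical
        obtain ⟨S, hS⟩ := exists_supp f
        obtain ⟨S', hS'⟩ := exists_supp f'
        change tD i (f * f') = f • tD i f' + f' • tD i f
        rw [tD_eq (S := S ∪ S') (fun J hJ => hS J (by simp_all)),
          tD_eq (S := S ∪ S') (fun J hJ => hS' J (by simp_all)),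
          tD_eq (S := S ∪ S') (fun J hJ => by
            rw [Derivation.leibniz, hS J (by simp_all), hS' J (by simp_all)]; simp)]
        simp only [Derivation.leibniz, smul_eq_mul, mul_add, Finset.sum_add_distrib,
          Finset.mul_sum]
        have e1 : ∀ J, cU (inc i J) * (f * dU J f') = f * (cU (inc i J) * dU J f') :=
          fun J => by ring
        have e2 : ∀ J, cU (inc i J) * (f' * dU J f) = f' * (cU (inc i J) * dU J f) :=
          fun J => by ring
        simp only [e1, e2]
        ring)

theorem dD_coe (i : Fin N) (f : Loc N) : ((dD i f : Loc N) : Fn N) = Dtot i f := rfl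

theorem dD_eq {f : Loc N} {S : Finset (MI N)} (hS : ∀ J, J ∉ S → dU J f = 0) (i : Fin N) :
    dD i f = dX i f + ∑ J ∈ S, cU (inc i J) * dU J f := tD_eq hS i

theorem dD_cX (i l : Fin N) : dD i (cX l) = if i = l then 1 else 0 := by
  rw [dD_eq (S := ∅) (fun J _ => dU_cX J l), dX_cX]; simp

theorem dD_cU (i : Fin N) (J : MI N) : dD i (cU J) = cU (inc i J) := by
  rw [dD_eq (S := {J}) (fun K hK => by
    rw [dU_cU, if_neg (by simpa using hK)]), dX_cU]
  simp [dU_cU]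

theorem inc_inj (i : Fin N) : Function.Injective (inc i : MI N → MI N) := by
  intro J K h
  funext l
  have := congrFun h l
  by_cases hl : l = i
  · subst hl; simpa [inc] using this
  · simpa [inc, hl] using this

theorem inc_comm (i l : Fin N) (J : MI N) : inc i (inc l J) = inc l (inc i J) := by
  funext k
  by_cases h : i = l
  · subst h; rfl
  · by_cases h1 : k = i
    · subst h1; simp [inc, h]
    · by_cases h2 : k = l
      · subst h2; simp [inc, h1]
      · simp [inc, h1, h2]

theorem dX_dD (i l : Fin N) (f : Loc N) : dX i (dD l f) = dD l (dX i f) := by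
  obtain ⟨S, hS⟩ := exists_supp f
  rw [dD_eq hS, dD_eq (S := S) (fun J hJ => by rw [dC_comm, hS J hJ, map_zero])]
  simp only [map_add, map_sum, Derivation.leibniz, dX_cU, smul_eq_mul, mul_zero, add_zero]
  congr 1
  · exact dC_comm _ _ _
  · exact Finset.sum_congr rfl fun J _ => by rw [dC_comm]

/-- `[∂/∂u_{lJ}, d/dx^l] = ∂/∂u_J`. -/
theorem dU_dD_inc (J : MI N) (l : Fin N) (f : Loc N) :
    dU (inc l J) (dD l f) = dD l (dU (inc l J) f) + dU J f := by
  classical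
  obtain ⟨S₀, hS₀⟩ := exists_supp f
  have hS : ∀ K, K ∉ insert J S₀ → dU K f = 0 := fun K hK => hS₀ K (by simp_all)
  rw [dD_eq hS, dD_eq (S := insert J S₀) (fun K hK => by rw [dC_comm, hS K hK, map_zero])]
  simp only [map_add, map_sum, Derivation.leibniz, dU_cU, smul_eq_mul,
    (inc_inj l).eq_iff, Finset.sum_add_distrib, mul_ite, mul_one, mul_zero]
  rw [Finset.sum_ite_eq, if_pos (by simp), dC_comm (.inr (inc l J)) (.inl l), add_assoc]
  congr 2
  exact Finset.sum_congr rfl fun K _ => by rw [dC_comm]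

theorem dU_dD_of (J : MI N) (l : Fin N) (h : ∀ K, J ≠ inc l K) (f : Loc N) :
    dU J (dD l f) = dD l (dU J f) := by
  obtain ⟨S, hS⟩ := exists_supp f
  rw [dD_eq hS, dD_eq (S := S) (fun K hK => by rw [dC_comm, hS K hK, map_zero])]
  simp only [map_add, map_sum, Derivation.leibniz, dU_cU, smul_eq_mul, if_neg (h _), mul_zero,
    add_zero]
  rw [dC_comm (.inr J) (.inl l)]
  congr 1
  exact Finset.sum_congr rfl fun K _ => by rw [dC_comm]

theorem dD_comm (i l : Fin N) (f : Loc N) : dD i (dD l f) = dD l (dD i f) := by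
  classical
  obtain ⟨S, hS⟩ := exists_supp f
  have hS1 : ∀ K, K ∉ S ∪ S.image (inc l) → dU K (dD l f) = 0 := by
    intro K hK
    simp only [Finset.mem_union, Finset.mem_image, not_or, not_exists, not_and] at hK
    by_cases h : ∃ J, K = inc l J
    · obtain ⟨J, rfl⟩ := h
      rw [dU_dD_inc, hS _ hK.1, hS J (fun hJ => hK.2 J hJ rfl), map_zero, add_zero]
    · rw [dU_dD_of K l (not_exists.1 h), hS _ hK.1, map_zero]
  have hS2 : ∀ K, K ∉ S ∪ S.image (inc l) → dU K f = 0 := fun K hK => hS K (by simp_all)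
  have key : ∀ K, dU K (dD l f) = dD l (dU K f) +
      ∑ J ∈ S, if K = inc l J then dU J f else 0 := by
    intro K
    by_cases h : ∃ J, K = inc l J
    · obtain ⟨J, rfl⟩ := h
      rw [dU_dD_inc]
      simp only [(inc_inj l).eq_iff, Finset.sum_ite_eq]
      split_ifs with hJ
      · rfl
      · rw [hS J hJ]
    · rw [dU_dD_of K l (not_exists.1 h)]
      simp [not_exists.1 h]
  rw [dD_eq hS1 i, dD_eq hS2 i, dX_dD]
  simp only [key, map_add, map_sum, Derivation.leibniz, dD_cU, smul_eq_mul, mul_add,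
    Finset.sum_add_distrib]
  congr 2
  simp only [Finset.mul_sum]
  rw [Finset.sum_comm, ← Finset.sum_subset (Finset.subset_union_left (s₁ := S) (s₂ := S.image (inc l)))
    (fun K _ hK => by rw [hS K hK, zero_mul])]
  refine Finset.sum_congr rfl fun J hJ => ?_
  rw [Finset.sum_eq_single (inc l J)]
  · simp [inc_comm, mul_comm]
  · intro K _ hK; simp [hK]
  · intro h; simp [Finset.mem_image_of_mem _ hJ] at h

end JetBundle

/-! ### Iterated derivatives and their commutation relations -/

namespace JetBundle
variable {N : ℕ}

open scoped IsMulCommutative in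
/-- Pairwise commuting elements of a ring can be substituted into polynomials. This turns identities
between products of powers of derivations into identities between monomials. -/
theorem exists_evalHom {σ A : Type*} [Ring A] [Algebra ℝ A] (a : σ → A)
    (h : ∀ i j, a i * a j = a j * a i) :
    ∃ φ : MvPolynomial σ ℝ →ₐ[ℝ] A, ∀ i, φ (MvPolynomial.X i) = a i := by
  have : IsMulCommutative (Algebra.adjoin ℝ (Set.range a)) :=
    Algebra.isMulCommutative_adjoin ℝ (by rintro _ ⟨i, rfl⟩ _ ⟨j, rfl⟩; exact h i j)
  let b : σ → Algebra.adjoin ℝ (Set.range a) := fun i => ⟨a i, Algebra.subset_adjoin ⟨i, rfl⟩⟩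
  refine ⟨(Subalgebra.val (Algebra.adjoin ℝ (Set.range a))).comp (MvPolynomial.aeval b),
    fun i => ?_⟩
  simp [b]

/-- `ℝ`-linear endomorphisms of `Loc(E)`. -/
abbrev LEnd (N : ℕ) := Module.End ℝ (Loc N)

/-- `d/dx^i` as a linear endomorphism. -/
noncomputable abbrev eD (i : Fin N) : LEnd N := (dD i : Loc N →ₗ[ℝ] Loc N)
/-- `∂/∂u_J` as a linear endomorphism. -/
noncomputable abbrev eU (J : MI N) : LEnd N := (dU J : Loc N →ₗ[ℝ] Loc N)

theorem eD_comm (i l : Fin N) : eD i * eD l = eD l * eD i := LinearMap.ext fun f => dD_comm i l f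

theorem eU_comm (J K : MI N) : eU J * eU K = eU K * eU J :=
  LinearMap.ext fun f => dC_comm (.inr J) (.inr K) f

/-- `(d/dx)^I` on `Loc(E)`. -/
noncomputable def DP (I : MI N) : LEnd N := ((List.finRange N).map fun i => eD i ^ I i).prod

/-- `(∂/∂u)^α` on `Loc(E)`. -/
noncomputable def UP (α : MI N →₀ ℕ) : LEnd N := (α.support.toList.map fun J => eU J ^ α J).prod

/-- Iterated application of differential operators to functions agrees with the product of the
corresponding endomorphisms of `Loc(E)`. -/
theorem foldr_coe {σ : Type*} (l : List σ) (k : σ → ℕ) (d : σ → Fn N → Fn N) (e : σ → LEnd N)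
    (h : ∀ s (f : Loc N), d s f = (e s f : Loc N)) (f : Loc N) :
    l.foldr (fun i g => (d i)^[k i] ∘ g) id (f : Fn N) =
      (((l.map fun i => e i ^ k i).prod f : Loc N) : Fn N) := by
  induction l with
  | nil => rfl
  | cons a l ih =>
    have it : ∀ (m : ℕ) (g : Loc N), (d a)^[m] (g : Fn N) = ((e a ^ m) g : Loc N) := by
      intro m
      induction m with
      | zero => intro g; rfl
      | succ m im =>
        intro g
        rw [Function.iterate_succ_apply, h, im, pow_succ]
        rfl
    rw [List.foldr_cons, Function.comp_apply, ih, it, List.map_cons, List.prod_cons]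
    rfl

theorem DPow_coe (I : MI N) (f : Loc N) : DPow I (f : Fn N) = (DP I f : Loc N) :=
  foldr_coe _ I Dtot eD (fun _ _ => rfl) f

theorem UPow_coe (α : MI N →₀ ℕ) (f : Loc N) : UPow α (f : Fn N) = (UP α f : Loc N) :=
  foldr_coe _ α pderivU eU (fun _ _ => rfl) f

theorem DP_zero : DP (0 : MI N) = 1 := by
  rw [DP]; exact List.prod_eq_one (by simp)

theorem DP_inc (i : Fin N) (I : MI N) : DP (inc i I) = eD i * DP I := by
  obtain ⟨φ, hφ⟩ := exists_evalHom (eD (N := N)) eD_comm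
  have key : ∀ I : MI N, DP I = φ (∏ l, MvPolynomial.X l ^ I l) := by
    intro I
    rw [Fin.prod_univ_def, map_list_prod, DP, List.map_map]
    congr 1
    exact List.map_congr_left fun l _ => by simp [hφ]
  rw [key, key, ← hφ, ← map_mul]
  congr 1
  have : ∀ l, (MvPolynomial.X l : MvPolynomial (Fin N) ℝ) ^ inc i I l =
      (if l = i then MvPolynomial.X l else 1) * MvPolynomial.X l ^ I l := by
    intro l
    by_cases h : l = i
    · subst h; simp [inc, pow_succ']
    · simp [inc, h]
  simp only [this, Finset.prod_mul_distrib]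
  simp

theorem UP_zero : UP (0 : MI N →₀ ℕ) = 1 := by
  rw [UP]; exact List.prod_eq_one (by simp)

theorem UP_aux : ∃ φ : MvPolynomial (MI N) ℝ →ₐ[ℝ] LEnd N, (∀ J, φ (MvPolynomial.X J) = eU J) ∧
    ∀ α, UP α = φ (α.prod fun J k => MvPolynomial.X J ^ k) := by
  obtain ⟨φ, hφ⟩ := exists_evalHom (eU (N := N)) eU_comm
  refine ⟨φ, hφ, fun α => ?_⟩
  rw [Finsupp.prod, ← Finset.prod_map_toList, map_list_prod, UP, List.map_map]
  congr 1
  exact List.map_congr_left fun l _ => by simp [hφ]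

theorem UP_add (J : MI N) (α : MI N →₀ ℕ) : UP (Finsupp.single J 1 + α) = eU J * UP α := by
  obtain ⟨φ, hφ, key⟩ := UP_aux (N := N)
  rw [key, key, ← hφ, ← map_mul, Finsupp.prod_add_index' (by simp) (fun _ _ _ => pow_add _ _ _)]
  simp

theorem UP_comm (J : MI N) (α : MI N →₀ ℕ) : eU J * UP α = UP α * eU J := by
  obtain ⟨φ, hφ, key⟩ := UP_aux (N := N)
  rw [key, ← hφ, ← map_mul, ← map_mul, mul_comm]

/-- Induction on a multi-index, raising one entry at a time. -/
theorem mi_ind {P : MI N → Prop} (h0 : P 0) (h1 : ∀ i I, P I → P (inc i I)) (I : MI N) : P I := by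
  generalize hs : ∑ i, I i = s
  induction s generalizing I with
  | zero =>
    have : I = 0 := funext fun i => by simpa using (Finset.sum_eq_zero_iff.1 hs) i (by simp)
    exact this ▸ h0
  | succ s ih =>
    obtain ⟨i, hi⟩ : ∃ i, I i ≠ 0 := by
      by_contra h
      push Not at h
      simp [h] at hs
    have e : I = inc i (Function.update I i (I i - 1)) := by
      funext l
      by_cases hl : l = i
      · subst hl; simp [inc]; omega
      · simp [inc, hl]
    rw [e]
    refine h1 _ _ (ih _ ?_)
    have h2 := Finset.sum_update_of_mem (Finset.mem_univ i) I (I i - 1)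
    have h3 := Finset.add_sum_erase Finset.univ I (Finset.mem_univ i)
    rw [← Finset.erase_eq] at h2
    omega

/-- Induction on a vertical exponent, adding one factor `∂/∂u_J` at a time. -/
theorem exp_ind {P : (MI N →₀ ℕ) → Prop} (h0 : P 0)
    (h1 : ∀ J α, P α → P (Finsupp.single J 1 + α)) (α : MI N →₀ ℕ) : P α := by
  induction α using Finsupp.induction with
  | zero => exact h0
  | single_add J b f _ hb ih =>
    clear hb
    induction b with
    | zero => simpa using ih
    | succ b ib => rw [add_comm b 1, Finsupp.single_add, add_assoc]; exact h1 _ _ ib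

theorem sum_inc (i : Fin N) (I : MI N) : ∑ l, inc i I l = ∑ l, I l + 1 := by
  have : ∀ l, inc i I l = I l + if l = i then 1 else 0 := by
    intro l
    by_cases h : l = i
    · subst h; simp [inc]
    · simp [inc, h]
  simp [this, Finset.sum_add_distrib]

/-- Multiplication by `x^i`. -/
noncomputable def mX (i : Fin N) : LEnd N := LinearMap.mulLeft ℝ (cX i)

theorem mX_apply (i : Fin N) (f : Loc N) : mX i f = cX i * f := rfl

theorem eU_mX (J : MI N) (i : Fin N) (f : Loc N) : eU J (mX i f) = mX i (eU J f) := by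
  simp [mX_apply, dU_cX]

theorem UP_mX (α : MI N →₀ ℕ) (i : Fin N) (f : Loc N) : UP α (mX i f) = mX i (UP α f) := by
  induction α using exp_ind with
  | h0 => rw [UP_zero]; rfl
  | h1 J α ih => rw [UP_add, Module.End.mul_apply, Module.End.mul_apply, ih, eU_mX]

theorem eD_mX (l i : Fin N) : eD l * mX i = mX i * eD l + if l = i then 1 else 0 := by
  refine LinearMap.ext fun f => ?_
  have : dD l (cX i * f) = cX i * dD l f + f * (if l = i then 1 else 0) := by
    rw [Derivation.leibniz, dD_cX]; rfl
  split_ifs with h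
  · simpa [mX_apply, h] using this
  · simpa [mX_apply, h] using this

theorem ring_aux₁ {A : Type*} [Ring A] (d p x w : A) (h : d * x = x * d + w) :
    d * p * x - x * (d * p) = d * (p * x - x * p) + w * p := by
  have h2 : d * (x * p) = x * d * p + w * p := by rw [← mul_assoc, h, add_mul]
  rw [mul_sub, h2, mul_assoc, mul_assoc]
  abel

theorem ring_aux₂ {A : Type*} [Ring A] (u a d : A) :
    u * a * d - d * (u * a) = u * (a * d - d * a) + (u * d - d * u) * a := by
  rw [mul_sub, sub_mul, mul_assoc, mul_assoc, mul_assoc]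
  abel

/-- Iterated total derivatives of order less than `r`. -/
def lowerD (N r : ℕ) : Set (LEnd N) := {P | ∃ K : MI N, ∑ l, K l < r ∧ P = DP K}

/-- `[(d/dx)^K, x^i]` has order less than `|K|`. -/
theorem DP_mX (K : MI N) (i : Fin N) :
    DP K * mX i - mX i * DP K ∈ Submodule.span ℝ (lowerD N (∑ l, K l)) := by
  induction K using mi_ind with
  | h0 => rw [DP_zero, one_mul, mul_one, sub_self]; exact Submodule.zero_mem _
  | h1 l K ih =>
    rw [DP_inc, ring_aux₁ _ _ _ _ (eD_mX l i)]
    refine Submodule.add_mem _ ?_ ?_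
    · have : Submodule.span ℝ (lowerD N (∑ l, K l)) ≤
        (Submodule.span ℝ (lowerD N (∑ l', inc l K l'))).comap
          (LinearMap.mulLeft ℝ (eD l)) := by
        rw [Submodule.span_le]
        rintro _ ⟨K', h, rfl⟩
        exact Submodule.subset_span ⟨inc l K', by rw [sum_inc, sum_inc]; omega,
          (DP_inc l K').symm⟩
      exact this ih
    · split_ifs
      · rw [one_mul]
        exact Submodule.subset_span ⟨K, by rw [sum_inc]; omega, rfl⟩
      · rw [zero_mul]; exact Submodule.zero_mem _

/-- Every multi-index occurring in `α` has length at most one more than some multi-index occurring in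
`β`. Hence passing from `α` to `β` lowers `degf` by at most one. -/
def cov (α β : MI N →₀ ℕ) : Prop :=
  ∀ J ∈ α.support, ∃ J' ∈ β.support, ∑ l, J l ≤ ∑ l, J' l + 1

theorem cov.degf_le {α β : MI N →₀ ℕ} (h : cov α β) : degf α ≤ degf β + 1 := by
  refine Finset.sup_le fun J hJ => ?_
  obtain ⟨J', hJ', hle⟩ := h J hJ
  exact hle.trans (Nat.add_le_add_right (Finset.le_sup (f := fun J : MI N => ∑ i, J i) hJ') 1)

theorem cov_refl (α : MI N →₀ ℕ) : cov α α := fun J hJ => ⟨J, hJ, by omega⟩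

theorem cov.add {α β : MI N →₀ ℕ} (h : cov α β) {J J' : MI N} (hJ : ∑ l, J l ≤ ∑ l, J' l + 1) :
    cov (Finsupp.single J 1 + α) (Finsupp.single J' 1 + β) := by
  classical
  have mem : ∀ (K : MI N) (γ : MI N →₀ ℕ) (L : MI N),
      L ∈ (Finsupp.single K 1 + γ).support ↔ L = K ∨ L ∈ γ.support := by
    intro K γ L
    by_cases h : L = K
    · subst h; simp
    · simp [h]
  intro L hL
  rcases (mem _ _ _).1 hL with rfl | hL
  · exact ⟨J', (mem _ _ _).2 (.inl rfl), hJ⟩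
  · obtain ⟨L', h1, h2⟩ := h L hL
    exact ⟨L', (mem _ _ _).2 (.inr h1), h2⟩

/-- Iterated vertical derivatives whose exponent has almost the same degree as `α`. -/
def covU (α : MI N →₀ ℕ) : Set (LEnd N) := {P | ∃ β, cov α β ∧ P = UP β}

/-- Vertical derivatives `∂/∂u_{J'}` with `|J'| ≥ |J| - 1`. -/
def covJ (J : MI N) : Set (LEnd N) := {P | ∃ J' : MI N, ∑ l, J l ≤ ∑ l, J' l + 1 ∧ P = eU J'}

/-- `[(∂/∂u)^α, d/dx^i]` is a combination of `(∂/∂u)^β` with `β` covering `α`, because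
`[∂/∂u_J, d/dx^i]` is either zero or `∂/∂u_{J'}` with `J = iJ'`. -/
theorem UP_eD (α : MI N →₀ ℕ) (i : Fin N) :
    UP α * eD i - eD i * UP α ∈ Submodule.span ℝ (covU α) := by
  induction α using exp_ind with
  | h0 => rw [UP_zero, one_mul, mul_one, sub_self]; exact Submodule.zero_mem _
  | h1 J α ih =>
    have h1 : eU J * eD i - eD i * eU J ∈ Submodule.span ℝ (covJ J) := by
      by_cases h : ∃ K, J = inc i K
      · obtain ⟨K, rfl⟩ := h
        have : eU (inc i K) * eD i - eD i * eU (inc i K) = eU K :=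
          LinearMap.ext fun f => by simp [dU_dD_inc K i f]
        rw [this]
        exact Submodule.subset_span ⟨K, by rw [sum_inc], rfl⟩
      · have : eU J * eD i - eD i * eU J = 0 :=
          LinearMap.ext fun f => by simp [dU_dD_of J i (not_exists.1 h) f]
        rw [this]; exact Submodule.zero_mem _
    rw [UP_add, ring_aux₂]
    refine Submodule.add_mem _ ?_ ?_
    · have : Submodule.span ℝ (covU α) ≤
        (Submodule.span ℝ (covU (Finsupp.single J 1 + α))).comap
          (LinearMap.mulLeft ℝ (eU J)) := by
        rw [Submodule.span_le]
        rintro _ ⟨β, h, rfl⟩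
        exact Submodule.subset_span ⟨_, h.add (by omega), (UP_add J β).symm⟩
      exact this ih
    · have : Submodule.span ℝ (covJ J) ≤
        (Submodule.span ℝ (covU (Finsupp.single J 1 + α))).comap
          (LinearMap.mulRight ℝ (UP α)) := by
        rw [Submodule.span_le]
        rintro _ ⟨J', h, rfl⟩
        exact Submodule.subset_span ⟨_, (cov_refl α).add h, (UP_add J' α).symm⟩
      exact this h1

/-- Local functions depending on no `u_J` with `|J| > M`. -/
def lowJet (M : ℕ) (f : Loc N) : Prop := ∀ J : MI N, M < ∑ l, J l → dU J f = 0

theorem exists_lowJet (f : Loc N) : ∃ M, lowJet M f := by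
  obtain ⟨S, hS⟩ := exists_supp f
  refine ⟨S.sup fun J => ∑ l, J l, fun J hJ => hS J fun h => ?_⟩
  have := Finset.le_sup (f := fun J : MI N => ∑ i, J i) h
  omega

theorem lowJet.mono {M M' : ℕ} {f : Loc N} (h : lowJet M f) (hM : M ≤ M') : lowJet M' f :=
  fun J hJ => h J (by omega)

theorem lowJet.mX {M : ℕ} {f : Loc N} (h : lowJet M f) (i : Fin N) : lowJet M (mX i f) :=
  fun J hJ => by
    have := eU_mX J i f
    simp only [Derivation.coeFn_coe] at this
    rw [this, h J hJ, map_zero]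

theorem lowJet.eD {M : ℕ} {f : Loc N} (h : lowJet M f) (i : Fin N) : lowJet (M + 1) (dD i f) := by
  intro J hJ
  by_cases hK : ∃ K, J = inc i K
  · obtain ⟨K, rfl⟩ := hK
    rw [sum_inc] at hJ
    rw [dU_dD_inc, h _ (by rw [sum_inc]; omega), h K (by omega)]
    simp
  · rw [dU_dD_of J i (not_exists.1 hK), h J (by omega), map_zero]

theorem lowJet.UP_eq_zero {M : ℕ} {f : Loc N} (h : lowJet M f) {α : MI N →₀ ℕ}
    (hα : M < degf α) : UP α f = 0 := by
  obtain ⟨J, hJ, hlt⟩ := (Finset.lt_sup_iff (a := M)).1 hα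
  have e : α = Finsupp.single J 1 + (α - Finsupp.single J 1) := by
    rw [add_tsub_cancel_of_le]
    rw [Finsupp.single_le_iff]
    have := Finsupp.mem_support_iff.1 hJ
    omega
  rw [e, UP_add, UP_comm, Module.End.mul_apply]
  have : eU J f = 0 := h J hlt
  rw [this, map_zero]

end JetBundle

/-! ### The filtered space of polarized operators -/

namespace JetBundle
variable {N n : ℕ}

theorem DP_comm (i : Fin N) (K : MI N) : DP K * eD i = eD i * DP K := by
  induction K using mi_ind with
  | h0 => rw [DP_zero, one_mul, mul_one]
  | h1 l K ih => rw [DP_inc, mul_assoc, ih, ← mul_assoc, eD_comm, mul_assoc]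

theorem derivation_prod {ι : Type*} [DecidableEq ι] (d : Derivation ℝ (Loc N) (Loc N))
    (g : ι → Loc N) (s : Finset ι) :
    d (∏ j ∈ s, g j) = ∑ l ∈ s, d (g l) * ∏ j ∈ s.erase l, g j := by
  induction s using Finset.induction_on with
  | empty => simp
  | insert a s ha ih =>
    rw [Finset.prod_insert ha, Derivation.leibniz, ih, Finset.sum_insert ha,
      Finset.erase_insert ha, add_comm, smul_eq_mul, smul_eq_mul, mul_comm, Finset.mul_sum]
    congr 1
    refine Finset.sum_congr rfl fun l hl => ?_
    have : l ≠ a := fun h => ha (h ▸ hl)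
    rw [Finset.erase_insert_of_ne this.symm, Finset.prod_insert (by simp [ha])]
    ring

/-- `n`-ary maps on `Loc(E)`. -/
abbrev U (N n : ℕ) := (Fin n → Loc N) → Loc N

/-- The operator `f ↦ c (d/dx)^K (∏_j P_j f_j)`. -/
noncomputable def elG (c : Loc N) (K : MI N) (P : Fin n → LEnd N) : U N n :=
  fun f => c * DP K (∏ j, P j (f j))

theorem elG_update (c : Loc N) (K : MI N) (P : Fin n → LEnd N) (l : Fin n) (Q : LEnd N)
    (f : Fin n → Loc N) : elG c K (Function.update P l Q) f =
      c * DP K (Q (f l) * ∏ j ∈ Finset.univ.erase l, P j (f j)) := by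
  rw [elG, ← Finset.mul_prod_erase _ _ (Finset.mem_univ l), Function.update_self]
  congr 3
  exact Finset.prod_congr rfl fun j hj => by rw [Function.update_of_ne (Finset.ne_of_mem_erase hj)]

/-- `elG` as a linear function of the operator in the slot `l`. -/
noncomputable def slotMap (c : Loc N) (K : MI N) (P : Fin n → LEnd N) (l : Fin n) :
    LEnd N →ₗ[ℝ] U N n where
  toFun Q := elG c K (Function.update P l Q)
  map_add' Q Q' := by
    funext f
    simp only [elG_update, Pi.add_apply, LinearMap.add_apply, add_mul, map_add, mul_add]
  map_smul' r Q := by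
    funext f
    simp only [elG_update, Pi.smul_apply, LinearMap.smul_apply, smul_mul_assoc, map_smul,
      mul_smul_comm, RingHom.id_apply]

theorem slotMap_apply (c : Loc N) (K : MI N) (P : Fin n → LEnd N) (l : Fin n) (Q : LEnd N) :
    slotMap c K P l Q = elG c K (Function.update P l Q) := rfl

/-- The Leibniz rule: `d/dx^i` on the product is the sum of `d/dx^i` on the factors. -/
theorem elG_leibniz (c : Loc N) (K : MI N) (P : Fin n → LEnd N) (i : Fin N) :
    ∑ l, elG c K (Function.update P l (eD i * P l)) = elG c (inc i K) P := by
  funext f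
  rw [Finset.sum_apply]
  simp only [elG_update]
  rw [← Finset.mul_sum, ← map_sum, elG, DP_inc, ← DP_comm,
    Module.End.mul_apply]
  congr 2
  exact (derivation_prod (dD i) (fun j => P j (f j)) Finset.univ).symm

variable [NeZero n]

/-- The operator in the `j`-th slot of a polarized monomial. -/
noncomputable def slotP (Iα : Idx N n) (j : Fin n) : LEnd N :=
  if j = 0 then UP (Iα.2 j) else DP (Iα.1 j) * UP (Iα.2 j)

/-- The polarized monomial with index `Iα` and coefficient `c`. -/
noncomputable def el (c : Loc N) (Iα : Idx N n) : U N n := elG c (Iα.1 0) (slotP Iα)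

/-- The polarized monomial `el c Iα` as a linear function of its coefficient `c`. -/
noncomputable def elL (Iα : Idx N n) : Loc N →ₗ[ℝ] U N n where
  toFun c := el c Iα
  map_add' c c' := by funext f; simp [el, elG, add_mul]
  map_smul' r c := by funext f; simp [el, elG]

/-- Realization of finitely supported polarized coefficient data. -/
noncomputable def rl : (Idx N n →₀ Loc N) →ₗ[ℝ] U N n := Finsupp.lsum ℝ elL

theorem rl_single (Iα : Idx N n) (c : Loc N) : rl (Finsupp.single Iα c) = el c Iα := by
  rw [rl, Finsupp.lsum_single]; rfl

/-- Total vertical degree of an index. -/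
def dg (Iα : Idx N n) : ℕ := ∑ j, degf (Iα.2 j)

/-- Span of the polarized monomials with index in `s`. -/
noncomputable def Sp (s : Set (Idx N n)) : Submodule ℝ (U N n) :=
  (Finsupp.supported (Loc N) ℝ s).map rl

theorem el_mem {s : Set (Idx N n)} {Iα : Idx N n} (h : Iα ∈ s) (c : Loc N) : el c Iα ∈ Sp s :=
  ⟨_, Finsupp.single_mem_supported ℝ c h, rl_single Iα c⟩

theorem Sp_le {s : Set (Idx N n)} {W : Submodule ℝ (U N n)}
    (h : ∀ Iα ∈ s, ∀ c, el c Iα ∈ W) : Sp s ≤ W := by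
  rintro _ ⟨q, hq, rfl⟩
  rw [rl, Finsupp.lsum_apply, Finsupp.sum]
  exact Submodule.sum_mem _ fun Iα hI => h Iα (hq hI) _

theorem Sp_mono {s t : Set (Idx N n)} (h : s ⊆ t) : Sp s ≤ Sp t :=
  Sp_le fun _ hI c => el_mem (h hI) c

/-- Monomials of total vertical degree at least `k`. -/
def dgGe (k : ℕ) : Set (Idx N n) := {Iα | k ≤ dg Iα}

/-- The span of the polarized monomials with `Σ_j degf (α_j) ≥ k`. -/
noncomputable def Fk (k : ℕ) : Submodule ℝ (U N n) := Sp (dgGe k)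

theorem Fk_anti {k l : ℕ} (h : k ≤ l) : (Fk l : Submodule ℝ (U N n)) ≤ Fk k :=
  Sp_mono fun _ hI => le_trans h hI

/-- Tuples of local functions depending on the jet coordinates of order `≤ M` only. -/
def tupM (M : ℕ) (f : Fin n → Loc N) : Prop := ∀ j, lowJet M (f j)

omit [NeZero n] in
theorem exists_tupM (f : Fin n → Loc N) : ∃ M, tupM M f := by
  choose M hM using fun j => exists_lowJet (f j)
  exact ⟨Finset.univ.sup M, fun j => (hM j).mono (Finset.le_sup (Finset.mem_univ j))⟩

/-- A monomial of large vertical degree kills tuples of bounded jet order, because one of its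
factors contains some `∂/∂u_J` with `|J|` above this order. Hence sums of `v k ∈ Fk k` are locally
finite. -/
theorem Fk_vanish {k M : ℕ} {u : U N n} (hu : u ∈ Fk k) {f : Fin n → Loc N} (hf : tupM M f)
    (h : n * M < k) : u f = 0 := by
  have : (Fk k : Submodule ℝ (U N n)) ≤ LinearMap.ker (LinearMap.proj f : U N n →ₗ[ℝ] Loc N) := by
    refine Sp_le fun Iα hI c => ?_
    obtain ⟨j, hj⟩ : ∃ j, M < degf (Iα.2 j) := by
      by_contra hc
      push Not at hc
      have := Finset.sum_le_card_nsmul Finset.univ (fun j => degf (Iα.2 j)) M fun j _ => hc j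
      simp only [Finset.card_univ, Fintype.card_fin, smul_eq_mul] at this
      have h3 : k ≤ ∑ j, degf (Iα.2 j) := hI
      omega
    change el c Iα f = 0
    have h0 : slotP Iα j (f j) = 0 := by
      rw [slotP]
      split_ifs
      · exact (hf j).UP_eq_zero hj
      · rw [Module.End.mul_apply, (hf j).UP_eq_zero hj, map_zero]
    rw [el, elG, Finset.prod_eq_zero (Finset.mem_univ j) h0, map_zero, mul_zero]
  exact this hu

/-- `w` is the locally finite sum of the `v k`. -/
def SumsTo (v : ℕ → U N n) (w : U N n) : Prop :=
  ∀ M f, tupM M f → ∃ B₀, ∀ B, B₀ ≤ B → w f = ∑ k ∈ Finset.range B, v k f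

omit [NeZero n] in
theorem SumsTo.unique {v : ℕ → U N n} {w w' : U N n} (h : SumsTo v w) (h' : SumsTo v w') :
    w = w' := by
  funext f
  obtain ⟨M, hM⟩ := exists_tupM f
  obtain ⟨B, hB⟩ := h M f hM
  obtain ⟨B', hB'⟩ := h' M f hM
  rw [hB (max B B') (le_max_left _ _), hB' (max B B') (le_max_right _ _)]

omit [NeZero n] in
theorem SumsTo.add {v v' : ℕ → U N n} {w w' : U N n} (h : SumsTo v w) (h' : SumsTo v' w') :
    SumsTo (v + v') (w + w') := by
  intro M f hM
  obtain ⟨B, hB⟩ := h M f hM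
  obtain ⟨B', hB'⟩ := h' M f hM
  refine ⟨max B B', fun C hC => ?_⟩
  rw [Pi.add_apply, hB C (by omega), hB' C (by omega), ← Finset.sum_add_distrib]
  rfl

/-- A family of `v k ∈ Fk (k - 1)` has a locally finite sum. -/
theorem exists_sumsTo {v : ℕ → U N n} (hv : ∀ k, v k ∈ Fk (k - 1)) : ∃ w, SumsTo v w := by
  refine ⟨fun f => ∑ k ∈ Finset.range (n * (exists_tupM f).choose + 2), v k f, fun M f hM =>
    ⟨n * (exists_tupM f).choose + 2, fun B hB => ?_⟩⟩
  refine Finset.sum_subset (Finset.range_subset_range.2 hB) fun k _ hk => ?_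
  refine Fk_vanish (hv k) (exists_tupM f).choose_spec ?_
  simp only [Finset.mem_range] at hk
  omega

/-- Polarized local differential operators, as maps on tuples of local functions. -/
noncomputable def PL (N n : ℕ) [NeZero n] : Submodule ℝ (U N n) where
  carrier := {w | ∃ v : ℕ → U N n, (∀ k, v k ∈ Fk k) ∧ SumsTo v w}
  zero_mem' := ⟨0, fun _ => Submodule.zero_mem _, fun _ _ _ => ⟨0, fun _ _ => by simp⟩⟩
  add_mem' := by
    rintro w w' ⟨v, hv, h⟩ ⟨v', hv', h'⟩
    exact ⟨v + v', fun k => Submodule.add_mem _ (hv k) (hv' k), h.add h'⟩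
  smul_mem' := by
    rintro r w ⟨v, hv, h⟩
    refine ⟨r • v, fun k => Submodule.smul_mem _ _ (hv k), fun M f hM => ?_⟩
    obtain ⟨B, hB⟩ := h M f hM
    exact ⟨B, fun C hC => by simp [hB C hC, Finset.smul_sum]⟩

/-- The index shift: it suffices to have `v k ∈ Fk (k - 1)`. -/
theorem mem_PL_of_shift {v : ℕ → U N n} {w : U N n} (hv : ∀ k, v k ∈ Fk (k - 1))
    (h : SumsTo v w) : w ∈ PL N n := by
  refine ⟨fun k => if k = 0 then v 0 + v 1 else v (k + 1), fun k => ?_, fun M f hM => ?_⟩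
  · beta_reduce
    split_ifs with hk
    · subst hk; exact Submodule.add_mem _ (hv 0) (hv 1)
    · exact hv (k + 1)
  · obtain ⟨B, hB⟩ := h M f hM
    refine ⟨B + 1, fun C hC => ?_⟩
    obtain ⟨C, rfl⟩ : ∃ D, C = D + 1 := ⟨C - 1, by omega⟩
    rw [hB (C + 1 + 1) (by omega), Finset.sum_range_succ', Finset.sum_range_succ',
      Finset.sum_range_succ']
    simp [add_comm, add_assoc]

theorem Fk_le_PL : (Fk 0 : Submodule ℝ (U N n)) ≤ PL N n := by
  intro u hu
  refine ⟨fun k => if k = 0 then u else 0, fun k => ?_, fun M f _ => ⟨1, fun B hB => ?_⟩⟩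
  · beta_reduce
    split_ifs with h
    · exact h ▸ hu
    · exact Submodule.zero_mem _
  · rw [Finset.sum_eq_single 0 (fun b _ hb => by simp [hb]) (by simp; omega)]
    simp

/-- On tuples of bounded order an element of `PL` agrees with a finite sum of monomials. -/
theorem SumsTo.approx {v : ℕ → U N n} {w : U N n} (hv : ∀ k, v k ∈ Fk k) (h : SumsTo v w)
    (M B : ℕ) (hB : n * M < B) (f : Fin n → Loc N) (hf : tupM M f) :
    w f = (∑ k ∈ Finset.range B, v k) f := by
  obtain ⟨B', hB'⟩ := h M f hf
  rw [hB' (max B B') (le_max_right _ _), Finset.sum_apply]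
  symm
  refine Finset.sum_subset (Finset.range_subset_range.2 (le_max_left _ _)) fun k _ hk => ?_
  simp only [Finset.mem_range] at hk
  exact Fk_vanish (hv k) hf (by omega)

/-- A linear map compatible with the filtrations by order preserves `PL`, termwise. -/
theorem SumsTo.map {v : ℕ → U N n} {w : U N n} (hv : ∀ k, v k ∈ Fk k) (h : SumsTo v w)
    (Φ : U N n →ₗ[ℝ] U N n)
    (hc : ∀ M u, (∀ f, tupM (M + 1) f → u f = 0) → ∀ f, tupM M f → Φ u f = 0) :
    SumsTo (fun k => Φ (v k)) (Φ w) := by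
  intro M f hM
  refine ⟨n * (M + 1) + 1, fun B hB => ?_⟩
  have := hc M (w - ∑ k ∈ Finset.range B, v k) (fun g hg => by
    rw [Pi.sub_apply, h.approx hv (M + 1) B (by omega) g hg, sub_self]) f hM
  rw [map_sub, Pi.sub_apply, map_sum, Finset.sum_apply] at this
  exact sub_eq_zero.1 this

/-- A linear map which lowers the vertical degree by at most one, and whose value on tuples of jet
order `≤ M` depends only on the tuples of jet order `≤ M + 1`, preserves `PL`. -/
theorem PL_map (Φ : U N n →ₗ[ℝ] U N n)
    (hc : ∀ M u, (∀ f, tupM (M + 1) f → u f = 0) → ∀ f, tupM M f → Φ u f = 0)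
    (hΦ : ∀ k, ∀ u ∈ Fk k, Φ u ∈ Fk (k - 1)) {w : U N n} (hw : w ∈ PL N n) : Φ w ∈ PL N n := by
  obtain ⟨v, hv, h⟩ := hw
  exact mem_PL_of_shift (fun k => hΦ k _ (hv k)) (h.map hv Φ hc)

end JetBundle

/-! ### Composition with total derivatives and multiplication by `x^i` -/

namespace JetBundle
variable {N n : ℕ}

/-- Postcomposition with `d/dx^i`. -/
noncomputable def oL (i : Fin N) : U N n →ₗ[ℝ] U N n where
  toFun u := fun f => dD i (u f)
  map_add' u v := by funext f; simp
  map_smul' r u := by funext f; simp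

/-- Precomposition with `d/dx^i` in the `j`-th argument. -/
noncomputable def oR (i : Fin N) (j : Fin n) : U N n →ₗ[ℝ] U N n where
  toFun u := fun f => u (Function.update f j (dD i (f j)))
  map_add' _ _ := rfl
  map_smul' _ _ := rfl

theorem oL_apply (i : Fin N) (u : U N n) (f : Fin n → Loc N) : oL i u f = dD i (u f) := rfl

theorem oR_apply (i : Fin N) (j : Fin n) (u : U N n) (f : Fin n → Loc N) :
    oR i j u f = u (Function.update f j (dD i (f j))) := rfl

theorem oL_comm (i l : Fin N) : (oL i * oL l : Module.End ℝ (U N n)) = oL l * oL i :=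
  LinearMap.ext fun _ => funext fun _ => dD_comm i l _

theorem oL_oR (i l : Fin N) (j : Fin n) : (oL i * oR l j : Module.End ℝ (U N n)) = oR l j * oL i :=
  rfl

theorem oR_comm (i l : Fin N) (j k : Fin n) :
    (oR i j * oR l k : Module.End ℝ (U N n)) = oR l k * oR i j := by
  refine LinearMap.ext fun u => funext fun f => ?_
  change u _ = u _
  congr 1
  by_cases h : j = k
  · subst h
    simp [dD_comm i l]
  · simp [Ne.symm h, h, Function.update_comm h]

theorem tupM.update {M M' : ℕ} {f : Fin n → Loc N} (h : tupM M f) (hM : M ≤ M') (j : Fin n)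
    {g : Loc N} (hg : lowJet M' g) : tupM M' (Function.update f j g) := by
  intro l
  by_cases hl : l = j
  · subst hl; simpa using hg
  · rw [Function.update_of_ne hl]; exact (h l).mono hM

variable [NeZero n]

/-- The commutator with multiplication by `x^i` in the first argument. -/
noncomputable def oE (i : Fin N) : U N n →ₗ[ℝ] U N n where
  toFun u := fun f => u (Function.update f 0 (mX i (f 0))) - mX i (u f)
  map_add' u v := by funext f; simp only [Pi.add_apply, map_add]; abel
  map_smul' r u := by funext f; simp [smul_sub]

theorem oE_apply (i : Fin N) (u : U N n) (f : Fin n → Loc N) :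
    oE i u f = u (Function.update f 0 (mX i (f 0))) - mX i (u f) := rfl

/-- `E_i` and `L_i` generate a Weyl algebra. -/
theorem oE_oL (i l : Fin N) : (oE i * oL l : Module.End ℝ (U N n)) =
    oL l * oE i + if l = i then 1 else 0 := by
  refine LinearMap.ext fun u => funext fun f => ?_
  have h := LinearMap.congr_fun (eD_mX l i) (u f)
  simp only [Module.End.mul_apply, LinearMap.add_apply, Derivation.coeFn_coe] at h
  have e1 : (oE i * oL l : Module.End ℝ (U N n)) u f =
      dD l (u (Function.update f 0 (mX i (f 0)))) - mX i (dD l (u f)) := rfl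
  have e2 : (oL l * oE i : Module.End ℝ (U N n)) u f =
      dD l (u (Function.update f 0 (mX i (f 0)))) - dD l (mX i (u f)) := by
    rw [← map_sub]; rfl
  rw [LinearMap.add_apply, Pi.add_apply, e1, e2, h]
  split_ifs
  · simp only [Module.End.one_apply]; abel
  · simp

theorem oL_el (i : Fin N) (c : Loc N) (Iα : Idx N n) : oL i (el c Iα) =
    el (dD i c) Iα + el c (Function.update Iα.1 0 (inc i (Iα.1 0)), Iα.2) := by
  funext f
  have hs : slotP (Function.update Iα.1 0 (inc i (Iα.1 0)), Iα.2) = slotP Iα := by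
    funext j
    rw [slotP, slotP]
    split_ifs with h
    · rfl
    · simp [h]
  rw [oL_apply, Pi.add_apply, el, el, el, hs]
  simp only [elG, Function.update_self, Derivation.leibniz, smul_eq_mul, DP_inc,
    Module.End.mul_apply, Derivation.coeFn_coe]
  ring

omit [NeZero n] in
theorem oL_cont (i : Fin N) (M : ℕ) (u : U N n) (h : ∀ f, tupM (M + 1) f → u f = 0)
    (f : Fin n → Loc N) (hf : tupM M f) : oL i u f = 0 := by
  rw [oL_apply, h f fun j => (hf j).mono (by omega), map_zero]

omit [NeZero n] in
theorem oR_cont (i : Fin N) (j : Fin n) (M : ℕ) (u : U N n) (h : ∀ f, tupM (M + 1) f → u f = 0)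
    (f : Fin n → Loc N) (hf : tupM M f) : oR i j u f = 0 :=
  h _ (hf.update (by omega) j ((hf j).eD i))

theorem oE_vanish (i : Fin N) (M : ℕ) (u : U N n) (h : ∀ f, tupM M f → u f = 0)
    (f : Fin n → Loc N) (hf : tupM M f) : oE i u f = 0 := by
  rw [oE_apply, h _ (hf.update le_rfl 0 ((hf 0).mX i)), h f hf, map_zero, sub_zero]

theorem oL_Fk (i : Fin N) {k : ℕ} {u : U N n} (hu : u ∈ Fk k) : oL i u ∈ Fk k := by
  have : (Fk k : Submodule ℝ (U N n)) ≤ (Fk k).comap (oL i) := by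
    refine Sp_le fun Iα hI c => ?_
    rw [Submodule.mem_comap, oL_el]
    exact Submodule.add_mem _ (el_mem hI _)
      (el_mem (Iα := (Function.update Iα.1 0 (inc i (Iα.1 0)), Iα.2)) hI _)
  exact this hu

theorem el_update (c : Loc N) (Iα : Idx N n) (j : Fin n) (g : Loc N) (Q : LEnd N)
    (f : Fin n → Loc N) (h : slotP Iα j g = Q (f j)) :
    el c Iα (Function.update f j g) = elG c (Iα.1 0) (Function.update (slotP Iα) j Q) f := by
  rw [elG_update, el, elG, ← Finset.mul_prod_erase _ _ (Finset.mem_univ j), Function.update_self, h]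
  congr 3
  exact Finset.prod_congr rfl fun l hl => by rw [Function.update_of_ne (Finset.ne_of_mem_erase hl)]

/-- Monomials with total derivatives of order less than `r` of the whole product. -/
def ordLt (k r : ℕ) : Set (Idx N n) := {Iα | k ≤ dg Iα ∧ ∑ l, Iα.1 0 l < r}

/-- The commutator with `x^i` lowers the order in `d/dy_1`. In polarized form only the outer
derivatives `(d/dy_1)^I` contribute, as `x^i` commutes with the vertical derivatives of the first
argument. -/
theorem oE_el (i : Fin N) {k r : ℕ} {Iα : Idx N n} (hI : Iα ∈ ordLt k r) (c : Loc N) :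
    oE i (el c Iα) ∈ Sp (ordLt k (r - 1) : Set (Idx N n)) := by
  let Ψ : LEnd N →ₗ[ℝ] U N n :=
    { toFun := fun P f => c * P (∏ j, slotP Iα j (f j))
      map_add' := fun P Q => by funext f; simp [mul_add]
      map_smul' := fun r P => by funext f; simp }
  have h1 : oE i (el c Iα) = Ψ (DP (Iα.1 0) * mX i - mX i * DP (Iα.1 0)) := by
    funext f
    have e : ∏ j, slotP Iα j (Function.update f 0 (mX i (f 0)) j) =
        mX i (∏ j, slotP Iα j (f j)) := by
      rw [← Finset.mul_prod_erase _ _ (Finset.mem_univ 0),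
        ← Finset.mul_prod_erase _ (fun j => slotP Iα j (f j)) (Finset.mem_univ 0),
        mX_apply i (_ * _), ← mul_assoc]
      congr 1
      · rw [Function.update_self, slotP, if_pos rfl, UP_mX, mX_apply]
      · exact Finset.prod_congr rfl fun l hl => by
          rw [Function.update_of_ne (Finset.ne_of_mem_erase hl)]
    rw [oE_apply, el, elG, elG, e]
    change _ = c * (DP (Iα.1 0) * mX i - mX i * DP (Iα.1 0)) _
    simp only [LinearMap.sub_apply, Module.End.mul_apply, mX_apply]
    ring
  rw [h1]
  have h2 : Submodule.span ℝ (lowerD N (∑ l, Iα.1 0 l)) ≤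
      (Sp (ordLt k (r - 1) : Set (Idx N n))).comap Ψ := by
    rw [Submodule.span_le]
    rintro _ ⟨K, hK, rfl⟩
    have : Ψ (DP K) = el c (Function.update Iα.1 0 K, Iα.2) := by
      have hs : slotP (Function.update Iα.1 0 K, Iα.2) = slotP Iα := by
        funext j
        rw [slotP, slotP]
        split_ifs with h
        · rfl
        · simp [h]
      funext f
      rw [el, hs, elG]
      simp [Ψ]
    change Ψ (DP K) ∈ Sp (ordLt k (r - 1) : Set (Idx N n))
    rw [this]
    have h3 : (Function.update Iα.1 0 K, Iα.2) ∈ (ordLt k (r - 1) : Set (Idx N n)) := by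
      refine ⟨hI.1, ?_⟩
      have := hI.2
      simp only [Function.update_self]
      omega
    exact el_mem h3 c
  exact h2 (DP_mX _ _)

theorem oE_Sp (i : Fin N) {k r : ℕ} {u : U N n} (hu : u ∈ Sp (ordLt k r : Set (Idx N n))) :
    oE i u ∈ Sp (ordLt k (r - 1) : Set (Idx N n)) :=
  (Sp_le (W := (Sp (ordLt k (r - 1))).comap (oE i)) fun _ hI c => oE_el i hI c) hu

theorem oE_Fk (i : Fin N) {k : ℕ} {u : U N n} (hu : u ∈ Fk k) : oE i u ∈ Fk k := by
  refine (Sp_le (W := (Fk k).comap (oE i)) fun Iα hI c => ?_) hu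
  exact Sp_mono (fun J hJ => hJ.1) (oE_el i (k := k) (r := ∑ l, Iα.1 0 l + 1) ⟨hI, by omega⟩ c)

/-- `E_i` is nilpotent on finite sums of monomials. -/
theorem oE_nilp (i : Fin N) {u : U N n} (hu : u ∈ Fk 0) : ∃ m, ∀ k, m ≤ k → (oE i ^ k) u = 0 := by
  obtain ⟨q, hq, rfl⟩ := hu
  let r := q.support.sup fun Iα => ∑ l, Iα.1 0 l + 1
  have h0 : rl q ∈ Sp (ordLt 0 r : Set (Idx N n)) := by
    refine ⟨q, fun Iα hI => ⟨Nat.zero_le _, ?_⟩, rfl⟩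
    have := Finset.le_sup (f := fun Iα : Idx N n => ∑ l, Iα.1 0 l + 1) hI
    exact this
  have h1 : ∀ k, (oE i ^ k) (rl q) ∈ Sp (ordLt 0 (r - k) : Set (Idx N n)) := by
    intro k
    induction k with
    | zero => exact h0
    | succ k ih =>
      rw [pow_succ', Module.End.mul_apply]
      exact oE_Sp i ih
  refine ⟨r, fun k hk => ?_⟩
  have h2 := h1 k
  rw [Nat.sub_eq_zero_of_le hk] at h2
  have : Sp (ordLt 0 0 : Set (Idx N n)) ≤ ⊥ := Sp_le fun Iα hI => absurd hI.2 (by omega)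
  exact (Submodule.mem_bot ℝ).1 (this h2)

omit [NeZero n] in
theorem degf_update {k : ℕ} {Iα : Idx N n} (h : k ≤ dg Iα) (j : Fin n) {β : MI N →₀ ℕ}
    (hβ : cov (Iα.2 j) β) (I : Fin n → MI N) :
    (I, Function.update Iα.2 j β) ∈ (dgGe (k - 1) : Set (Idx N n)) := by
  have h1 := hβ.degf_le
  have h2 := Finset.add_sum_erase Finset.univ (fun l => degf (Iα.2 l)) (Finset.mem_univ j)
  have h3 := Finset.add_sum_erase Finset.univ (fun l => degf (Function.update Iα.2 j β l))
    (Finset.mem_univ j)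
  have h4 : ∑ l ∈ Finset.univ.erase j, degf (Function.update Iα.2 j β l) =
      ∑ l ∈ Finset.univ.erase j, degf (Iα.2 l) := Finset.sum_congr rfl fun l hl => by
    rw [Function.update_of_ne (Finset.ne_of_mem_erase hl)]
  rw [h4] at h3
  simp only [Function.update_self] at h3
  change k ≤ ∑ l, degf (Iα.2 l) at h
  change k - 1 ≤ ∑ l, degf (Function.update Iα.2 j β l)
  omega

/-- Changing the slot operator along the commutator of `∂^α` with `d/dx^i`. -/
theorem slot_cov {k : ℕ} {Iα : Idx N n} (h : k ≤ dg Iα) (c : Loc N) (j : Fin n) (i : Fin N)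
    (W : LEnd N) (hW : ∀ β, slotP (Iα.1, Function.update Iα.2 j β) j = W * UP β) :
    elG c (Iα.1 0) (Function.update (slotP Iα) j
      (W * (UP (Iα.2 j) * eD i - eD i * UP (Iα.2 j)))) ∈ Fk (k - 1) := by
  have h2 : Submodule.span ℝ (covU (Iα.2 j)) ≤ (Fk (k - 1)).comap
      ((slotMap c (Iα.1 0) (slotP Iα) j).comp (LinearMap.mulLeft ℝ W)) := by
    rw [Submodule.span_le]
    rintro _ ⟨β, hβ, rfl⟩
    change elG c (Iα.1 0) (Function.update (slotP Iα) j (W * UP β)) ∈ Fk (k - 1)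
    have : elG c (Iα.1 0) (Function.update (slotP Iα) j (W * UP β)) =
        el c (Iα.1, Function.update Iα.2 j β) := by
      rw [el]
      congr 1
      funext l
      by_cases hl : l = j
      · subst hl; rw [Function.update_self, hW]
      · rw [Function.update_of_ne hl, slotP, slotP]
        simp [hl]
    rw [this]
    exact el_mem (degf_update h j hβ _) c
  exact h2 (UP_eD _ _)

theorem slot_inc {k : ℕ} {Iα : Idx N n} (h : k ≤ dg Iα) (c : Loc N) {j : Fin n} (hj : j ≠ 0)
    (i : Fin N) :
    elG c (Iα.1 0) (Function.update (slotP Iα) j (eD i * slotP Iα j)) ∈ Fk k := by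
  have : elG c (Iα.1 0) (Function.update (slotP Iα) j (eD i * slotP Iα j)) =
      el c (Function.update Iα.1 j (inc i (Iα.1 j)), Iα.2) := by
    rw [el]
    simp only [Function.update_of_ne hj.symm]
    congr 1
    funext l
    by_cases hl : l = j
    · subst hl
      rw [Function.update_self, slotP, slotP, if_neg hj, if_neg hj]
      simp only [Function.update_self, DP_inc, mul_assoc]
    · rw [Function.update_of_ne hl, slotP, slotP]
      simp [hl]
  rw [this]
  exact el_mem (s := dgGe k)
    (Iα := (Function.update Iα.1 j (inc i (Iα.1 j)), Iα.2)) h c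

/-- Precomposition with `d/dx^i` lowers the vertical degree by at most one. Moving `d/dx^i` to the left
of `(∂/∂u)^α` produces the commutator of `UP_eD`; in the first argument, whose slot carries no
total derivatives, the remaining `d/dx^i` is redistributed by the Leibniz rule. -/
theorem oR_Fk (i : Fin N) (j : Fin n) {k : ℕ} {u : U N n} (hu : u ∈ Fk k) :
    oR i j u ∈ Fk (k - 1) := by
  refine (Sp_le (W := (Fk (k - 1)).comap (oR i j)) fun Iα hI c => ?_) hu
  have hI' : k ≤ dg Iα := hI
  have key : ∀ W : LEnd N, (∀ β, slotP (Iα.1, Function.update Iα.2 j β) j = W * UP β) →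
      W * eD i = eD i * W → oR i j (el c Iα) =
        elG c (Iα.1 0) (Function.update (slotP Iα) j
          (W * (UP (Iα.2 j) * eD i - eD i * UP (Iα.2 j)))) +
        elG c (Iα.1 0) (Function.update (slotP Iα) j (eD i * slotP Iα j)) := by
    intro W hW hc
    have hs : slotP Iα j = W * UP (Iα.2 j) := by
      have := hW (Iα.2 j)
      rwa [Function.update_eq_self] at this
    rw [← slotMap_apply, ← slotMap_apply, ← map_add, slotMap_apply]
    funext f
    rw [oR_apply]
    refine el_update c Iα j _ _ f ?_
    have : W * (UP (Iα.2 j) * eD i - eD i * UP (Iα.2 j)) + eD i * slotP Iα j =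
        slotP Iα j * eD i := by
      rw [hs, mul_sub, ← mul_assoc, ← mul_assoc, hc, mul_assoc (eD i)]
      abel
    rw [this]
    rfl
  rw [Submodule.mem_comap]
  by_cases hj : j = 0
  · have hW : ∀ β, slotP (Iα.1, Function.update Iα.2 j β) j = 1 * UP β := by
      intro β; rw [slotP, if_pos hj]; simp
    rw [key 1 hW (by rw [one_mul, mul_one])]
    refine Submodule.add_mem _ (slot_cov hI' c j i 1 hW) ?_
    have hl := elG_leibniz c (Iα.1 0) (slotP Iα) i
    rw [← Finset.add_sum_erase _ _ (Finset.mem_univ j)] at hl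
    rw [eq_sub_of_add_eq hl]
    refine Submodule.sub_mem _ ?_ (Submodule.sum_mem _ fun l hl => ?_)
    · have : elG c (inc i (Iα.1 0)) (slotP Iα) = oL i (el c Iα) - el (dD i c) Iα := by
        rw [oL_el, add_sub_cancel_left, el]
        simp only [Function.update_self]
        congr 1
        funext l
        rw [slotP, slotP]
        split_ifs with h
        · rfl
        · simp [h]
      rw [this]
      exact Fk_anti (Nat.sub_le k 1)
        (Submodule.sub_mem _ (oL_Fk i (el_mem hI c)) (el_mem hI _))
    · exact Fk_anti (Nat.sub_le k 1)
        (slot_inc hI' c (fun h => Finset.ne_of_mem_erase hl (h.trans hj.symm)) i)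
  · have hW : ∀ β, slotP (Iα.1, Function.update Iα.2 j β) j = DP (Iα.1 j) * UP β := by
      intro β; rw [slotP, if_neg hj]; simp
    rw [key _ hW (DP_comm i _)]
    exact Submodule.add_mem _ (slot_cov hI' c j i _ hW)
      (Fk_anti (Nat.sub_le k 1) (slot_inc hI' c hj i))

theorem oL_PL (i : Fin N) {w : U N n} (hw : w ∈ PL N n) : oL i w ∈ PL N n :=
  PL_map (oL i) (oL_cont i) (fun k _ hu => Fk_anti (Nat.sub_le k 1) (oL_Fk i hu)) hw

theorem oR_PL (i : Fin N) (j : Fin n) {w : U N n} (hw : w ∈ PL N n) : oR i j w ∈ PL N n :=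
  PL_map (oR i j) (oR_cont i j) (fun _ _ hu => oR_Fk i j hu) hw

end JetBundle

/-! ### A left inverse of composition with `d/dx^i` -/

namespace JetBundle
variable {N n : ℕ} [NeZero n]

/-- The `k`-th term of the homotopy inverse of `L_i`. -/
noncomputable def gT (i : Fin N) (k : ℕ) : Module.End ℝ (U N n) :=
  ((-1 : ℝ) ^ k / (k + 1).factorial) • (oL i ^ k * oE i ^ (k + 1))

theorem oE_oL_pow (i : Fin N) (k : ℕ) : (oE i ^ (k + 1) * oL i : Module.End ℝ (U N n)) =
    oL i * oE i ^ (k + 1) + (k + 1 : ℝ) • oE i ^ k := by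
  have h : (oE i * oL i : Module.End ℝ (U N n)) = oL i * oE i + 1 := by
    rw [oE_oL, if_pos rfl]
  induction k with
  | zero => simp [h]
  | succ k ih =>
    rw [pow_succ', mul_assoc, ih, mul_add, ← mul_assoc, h, add_mul, one_mul, mul_smul_comm,
      ← pow_succ', mul_assoc, ← pow_succ', add_assoc]
    push_cast
    module

/-- By the Weyl relation, the partial sums of `Σ_k gT i k ∘ L_i` telescope to the identity up to a
multiple of `L_i^m E_i^m`, which vanishes for large `m` by nilpotency. -/
theorem gT_telescope (i : Fin N) (m : ℕ) :
    (∑ k ∈ Finset.range m, gT i k * oL i : Module.End ℝ (U N n)) =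
      1 - ((-1 : ℝ) ^ m / m.factorial) • (oL i ^ m * oE i ^ m) := by
  induction m with
  | zero => simp
  | succ m ih =>
    rw [Finset.sum_range_succ, ih, gT, smul_mul_assoc, mul_assoc, oE_oL_pow, mul_add, smul_add,
      ← mul_assoc, ← pow_succ, mul_smul_comm, smul_smul]
    have e1 : (-1 : ℝ) ^ m / (m + 1).factorial * (m + 1) = (-1) ^ m / m.factorial := by
      rw [Nat.factorial_succ]
      have := Nat.factorial_ne_zero m
      push_cast
      field_simp
    have e2 : (-1 : ℝ) ^ (m + 1) / (m + 1).factorial = -((-1) ^ m / (m + 1).factorial) := by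
      rw [pow_succ]; ring
    rw [e1, e2]
    module

theorem oE_pow_oL {i l : Fin N} (h : i ≠ l) (k : ℕ) :
    (oE i ^ k * oL l : Module.End ℝ (U N n)) = oL l * oE i ^ k := by
  have h1 : Commute (oE i : Module.End ℝ (U N n)) (oL l) := by
    have := oE_oL (n := n) i l
    rwa [if_neg h.symm, add_zero] at this
  exact h1.pow_left k

theorem gT_oL {i l : Fin N} (h : i ≠ l) (k : ℕ) :
    (gT i k * oL l : Module.End ℝ (U N n)) = oL l * gT i k := by
  have h1 : Commute (oL i : Module.End ℝ (U N n)) (oL l) := oL_comm i l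
  rw [gT, smul_mul_assoc, mul_assoc, oE_pow_oL h, ← mul_assoc, (h1.pow_left k).eq, mul_smul_comm,
    mul_assoc]

theorem oE_pow_vanish (i : Fin N) (M k : ℕ) (u : U N n) (hu : ∀ f, tupM M f → u f = 0)
    (f : Fin n → Loc N) (hf : tupM M f) : (oE i ^ k) u f = 0 := by
  induction k generalizing u with
  | zero => exact hu f hf
  | succ k ih =>
    rw [pow_succ, Module.End.mul_apply]
    exact ih _ (oE_vanish i M u hu)

omit [NeZero n] in
theorem oL_pow_vanish (i : Fin N) {f : Fin n → Loc N} (m : ℕ) (v : U N n) (hv : v f = 0) :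
    (oL i ^ m) v f = 0 := by
  induction m generalizing v with
  | zero => exact hv
  | succ m ih =>
    rw [pow_succ, Module.End.mul_apply]
    exact ih _ (by rw [oL_apply, hv, map_zero])

/-- On each tuple, `E_i` is nilpotent on polarized operators. -/
theorem PL_nilp (i : Fin N) {w : U N n} (hw : w ∈ PL N n) (M : ℕ) :
    ∃ m, ∀ k, m ≤ k → ∀ f, tupM M f → (oE i ^ k) w f = 0 := by
  obtain ⟨v, hv, h⟩ := hw
  have hs : ∑ k ∈ Finset.range (n * M + 1), v k ∈ Fk 0 :=
    Submodule.sum_mem _ fun k _ => Fk_anti (Nat.zero_le k) (hv k)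
  obtain ⟨m, hm⟩ := oE_nilp i hs
  refine ⟨m, fun k hk f hf => ?_⟩
  have := oE_pow_vanish i M k (w - ∑ k ∈ Finset.range (n * M + 1), v k) (fun g hg => by
    rw [Pi.sub_apply, h.approx hv M (n * M + 1) (by omega) g hg, sub_self]) f hf
  rw [map_sub, hm k hk, sub_zero] at this
  exact this

theorem gT_vanish (i : Fin N) {u : U N n} {f : Fin n → Loc N} {k : ℕ}
    (h : (oE i ^ (k + 1)) u f = 0) : gT i k u f = 0 := by
  rw [gT, LinearMap.smul_apply, Pi.smul_apply, Module.End.mul_apply, oL_pow_vanish i k _ h, smul_zero]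

/-- The sum `∑_k (-1)^k/(k+1)! L_i^k E_i^{k+1}`, a left inverse of `L_i` on `PL`. -/
noncomputable def oG (i : Fin N) (u : U N n) : U N n := fun f => ∑ᶠ k, gT i k u f

theorem oG_eq (i : Fin N) {w : U N n} (hw : w ∈ PL N n) (M : ℕ) :
    ∃ m, ∀ k, m ≤ k → ∀ f, tupM M f → oG i w f = ∑ a ∈ Finset.range k, gT i a w f := by
  obtain ⟨m, hm⟩ := PL_nilp i hw M
  refine ⟨m, fun k hk f hf => finsum_eq_sum_of_support_subset _ fun a ha => ?_⟩
  by_contra hc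
  simp only [Finset.coe_range, Set.mem_Iio, not_lt] at hc
  exact ha (gT_vanish i (hm (a + 1) (by omega) f hf))

theorem oG_add (i : Fin N) {w w' : U N n} (hw : w ∈ PL N n) (hw' : w' ∈ PL N n) :
    oG i (w + w') = oG i w + oG i w' := by
  funext f
  obtain ⟨M, hM⟩ := exists_tupM f
  obtain ⟨m, hm⟩ := oG_eq i hw M
  obtain ⟨m', hm'⟩ := oG_eq i hw' M
  obtain ⟨m'', hm''⟩ := oG_eq i (Submodule.add_mem _ hw hw') M
  have e := max_le_iff.1 (le_refl (max m (max m' m'')))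
  rw [Pi.add_apply, hm _ e.1 f hM, hm' _ (max_le_iff.1 e.2).1 f hM,
    hm'' _ (max_le_iff.1 e.2).2 f hM, ← Finset.sum_add_distrib]
  exact Finset.sum_congr rfl fun a _ => by rw [map_add]; rfl

theorem oG_smul (i : Fin N) (r : ℝ) (w : U N n) : oG i (r • w) = r • oG i w := by
  funext f
  simp only [oG, map_smul, Pi.smul_apply]
  exact (smul_finsum r _).symm

/-- The map `oG i` is a left inverse of composition with `d/dx^i`. -/
theorem oG_oL_self (i : Fin N) {w : U N n} (hw : w ∈ PL N n) : oG i (oL i w) = w := by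
  funext f
  obtain ⟨M, hM⟩ := exists_tupM f
  obtain ⟨m, hm⟩ := oG_eq i (oL_PL i hw) M
  obtain ⟨m', hm'⟩ := PL_nilp i hw M
  have e := max_le_iff.1 (le_refl (max m m'))
  rw [hm _ e.1 f hM]
  have := congrFun (LinearMap.congr_fun (gT_telescope i (max m m')) w) f
  rw [LinearMap.sum_apply, Finset.sum_apply, LinearMap.sub_apply, Pi.sub_apply,
    LinearMap.smul_apply, Pi.smul_apply] at this
  refine this.trans ?_
  have h0 : (oL i ^ max m m' * oE i ^ max m m' : Module.End ℝ (U N n)) w f = 0 := by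
    exact oL_pow_vanish i _ _ (hm' _ e.2 f hM)
  rw [h0, smul_zero, sub_zero]
  rfl

theorem oG_oL {i l : Fin N} (h : i ≠ l) {w : U N n} (hw : w ∈ PL N n) :
    oG i (oL l w) = oL l (oG i w) := by
  funext f
  obtain ⟨M, hM⟩ := exists_tupM f
  obtain ⟨m, hm⟩ := oG_eq i (oL_PL l hw) M
  obtain ⟨m', hm'⟩ := oG_eq i hw M
  have e := max_le_iff.1 (le_refl (max m m'))
  rw [hm _ e.1 f hM, oL_apply, hm' _ e.2 f hM, map_sum]
  refine Finset.sum_congr rfl fun a _ => ?_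
  exact congrFun (LinearMap.congr_fun (gT_oL h a) w) f

theorem gT_Fk (i : Fin N) {k : ℕ} {u : U N n} (hu : u ∈ Fk k) (a : ℕ) : gT i a u ∈ Fk k := by
  have h1 : ∀ (m : ℕ), ∀ v ∈ Fk (N := N) (n := n) k, (oE i ^ m) v ∈ Fk k := by
    intro m
    induction m with
    | zero => intro v hv; exact hv
    | succ m ih => intro v hv; rw [pow_succ, Module.End.mul_apply]; exact ih _ (oE_Fk i hv)
  have h2 : ∀ (m : ℕ), ∀ v ∈ Fk (N := N) (n := n) k, (oL i ^ m) v ∈ Fk k := by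
    intro m
    induction m with
    | zero => intro v hv; exact hv
    | succ m ih => intro v hv; rw [pow_succ, Module.End.mul_apply]; exact ih _ (oL_Fk i hv)
  exact Submodule.smul_mem _ _ (h2 _ _ (h1 _ _ hu))

theorem oG_Fk (i : Fin N) {k : ℕ} {u : U N n} (hu : u ∈ Fk k) : oG i u ∈ Fk k := by
  obtain ⟨m, hm⟩ := oE_nilp i (Fk_anti (Nat.zero_le k) hu)
  have : oG i u = ∑ a ∈ Finset.range m, gT i a u := by
    funext f
    rw [Finset.sum_apply]
    refine finsum_eq_sum_of_support_subset _ fun a ha => ?_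
    by_contra hc
    simp only [Finset.coe_range, Set.mem_Iio, not_lt] at hc
    exact ha (gT_vanish i (by rw [hm (a + 1) (by omega)]; rfl))
  rw [this]
  exact Submodule.sum_mem _ fun a _ => gT_Fk i hu a

theorem oG_PL (i : Fin N) {w : U N n} (hw : w ∈ PL N n) : oG i w ∈ PL N n := by
  have hw₀ := hw
  obtain ⟨v, hv, h⟩ := hw
  refine ⟨fun k => oG i (v k), fun k => oG_Fk i (hv k), fun M f hM => ⟨n * M + 1, fun B hB => ?_⟩⟩
  have hvP : ∀ k, v k ∈ PL N n := fun k => Fk_le_PL (Fk_anti (Nat.zero_le k) (hv k))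
  have hsum : ∀ C, ∑ k ∈ Finset.range C, v k ∈ PL N n ∧
      oG i (∑ k ∈ Finset.range C, v k) = ∑ k ∈ Finset.range C, oG i (v k) := by
    intro C
    induction C with
    | zero =>
      refine ⟨Submodule.zero_mem _, ?_⟩
      have := oG_smul i 0 (0 : U N n)
      simpa using this
    | succ C ih =>
      rw [Finset.sum_range_succ, Finset.sum_range_succ]
      exact ⟨Submodule.add_mem _ ih.1 (hvP C), by rw [oG_add i ih.1 (hvP C), ih.2]⟩
  have hz : ∀ g, tupM M g → (w - ∑ k ∈ Finset.range B, v k) g = 0 := fun g hg => by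
    rw [Pi.sub_apply, h.approx hv M B (by omega) g hg, sub_self]
  have h0 : oG i (w - ∑ k ∈ Finset.range B, v k) f = 0 :=
    (finsum_congr fun a => gT_vanish i (oE_pow_vanish i M _ _ hz f hM)).trans finsum_zero
  have h1 := oG_add i (Submodule.sub_mem _ hw₀ (hsum B).1) (hsum B).1
  rw [sub_add_cancel] at h1
  rw [h1, Pi.add_apply, h0, zero_add, (hsum B).2, Finset.sum_apply]

end JetBundle

/-! ### The characteristic and integration by parts -/

namespace JetBundle
variable {N n : ℕ} [NeZero n]

/-- Finitely supported polarized coefficient data. -/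
abbrev FData (N n : ℕ) := Idx N n →₀ Loc N

/-- Data supported on indices of total vertical degree at least `k`. -/
noncomputable def Fd (k : ℕ) : Submodule ℝ (FData N n) := Finsupp.supported (Loc N) ℝ (dgGe k)

/-- The index with the first multi-index replaced by `K`. -/
def setK (Iα : Idx N n) (K : MI N) : Idx N n := (Function.update Iα.1 0 K, Iα.2)

theorem setK_setK (Iα : Idx N n) (K K' : MI N) : setK (setK Iα K) K' = setK Iα K' := by
  simp [setK]

theorem setK_self (Iα : Idx N n) : setK Iα (Iα.1 0) = Iα := by
  simp [setK]

theorem setK_zero (Iα : Idx N n) (K : MI N) : (setK Iα K).1 0 = K := by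
  simp [setK]

theorem dg_setK (Iα : Idx N n) (K : MI N) : dg (setK Iα K) = dg Iα := rfl

/-- The characteristic on finitely supported data. -/
noncomputable def ch : FData N n →ₗ[ℝ] FData N n :=
  Finsupp.lsum ℝ fun Iα => Finsupp.lsingle (setK Iα 0) ∘ₗ
    ((-1 : ℝ) ^ (∑ i, Iα.1 0 i) • DP (Iα.1 0) : LEnd N)

theorem ch_single (Iα : Idx N n) (c : Loc N) : ch (Finsupp.single Iα c) =
    Finsupp.single (setK Iα 0) ((-1 : ℝ) ^ (∑ i, Iα.1 0 i) • DP (Iα.1 0) c) := by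
  rw [ch, Finsupp.lsum_single]; rfl

/-- The data of `d/dx^i ∘ A`. -/
noncomputable def ell (i : Fin N) : FData N n →ₗ[ℝ] FData N n :=
  Finsupp.lsum ℝ fun Iα => Finsupp.lsingle Iα ∘ₗ eD i +
    Finsupp.lsingle (setK Iα (inc i (Iα.1 0)))

theorem ell_single (i : Fin N) (Iα : Idx N n) (c : Loc N) : ell i (Finsupp.single Iα c) =
    Finsupp.single Iα (dD i c) + Finsupp.single (setK Iα (inc i (Iα.1 0))) c := by
  rw [ell, Finsupp.lsum_single]; rfl

theorem rl_ell (i : Fin N) (q : FData N n) : rl (ell i q) = oL i (rl q) := by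
  induction q using Finsupp.induction_linear with
  | zero => simp
  | add p q hp hq => simp [hp, hq]
  | single Iα c => rw [ell_single, map_add, rl_single, rl_single, rl_single, oL_el]; rfl

/-- The characteristic of a total derivative vanishes. -/
theorem ch_ell (i : Fin N) (q : FData N n) : ch (ell i q) = 0 := by
  induction q using Finsupp.induction_linear with
  | zero => simp
  | add p q hp hq => simp [hp, hq]
  | single Iα c =>
    rw [ell_single, map_add, ch_single, ch_single, setK_setK, setK_zero, ← Finsupp.single_add,
      sum_inc, DP_inc, ← DP_comm]
    simp [pow_succ]

omit [NeZero n] in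
theorem Fd_le {k : ℕ} {W : Submodule ℝ (FData N n)}
    (h : ∀ Iα ∈ dgGe k, ∀ c, Finsupp.single Iα c ∈ W) : Fd k ≤ W := by
  intro q hq
  rw [← q.sum_single]
  exact Submodule.sum_mem _ fun Iα hI => h Iα (hq hI) _

theorem ch_Fd {k : ℕ} {q : FData N n} (hq : q ∈ Fd k) : ch q ∈ Fd k := by
  refine (Fd_le (W := (Fd k).comap ch) fun Iα hI c => ?_) hq
  rw [Submodule.mem_comap, ch_single]
  exact Finsupp.single_mem_supported ℝ _ hI

theorem ell_Fd (i : Fin N) {k : ℕ} {q : FData N n} (hq : q ∈ Fd k) : ell i q ∈ Fd k := by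
  refine (Fd_le (W := (Fd k).comap (ell i)) fun Iα hI c => ?_) hq
  rw [Submodule.mem_comap, ell_single]
  exact Submodule.add_mem _ (Finsupp.single_mem_supported ℝ _ hI)
    (Finsupp.single_mem_supported ℝ _ hI)

/-- Sums of total derivatives of data of total vertical degree at least `k`. -/
noncomputable def ellSum (k : ℕ) : Submodule ℝ (FData N n) :=
  (Submodule.pi Set.univ fun _ : Fin N => Fd k).map
    (∑ i, (ell i) ∘ₗ (LinearMap.proj i : (Fin N → FData N n) →ₗ[ℝ] FData N n))

theorem mem_ellSum {k : ℕ} {q : FData N n} :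
    q ∈ ellSum k ↔ ∃ y : Fin N → FData N n, (∀ i, y i ∈ Fd k) ∧ ∑ i, ell i (y i) = q := by
  simp [ellSum]

theorem ell_mem_ellSum (i : Fin N) {k : ℕ} {q : FData N n} (hq : q ∈ Fd k) :
    ell i q ∈ ellSum k := by
  refine mem_ellSum.2 ⟨Pi.single i q, fun l => ?_, ?_⟩
  · by_cases h : l = i
    · subst h; simpa using hq
    · simp [h]
  · rw [Finset.sum_eq_single i (fun l _ hl => by simp [hl]) (by simp)]
    simp

/-- Integration by parts, by induction on the order in `d/dy_1`: data agree with their characteristic up to total derivatives. -/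
theorem sub_ch_mem {k : ℕ} {q : FData N n} (hq : q ∈ Fd k) : q - ch q ∈ ellSum k := by
  refine (Fd_le (W := (ellSum k).comap (LinearMap.id - ch)) fun Iα hI c => ?_) hq
  change Finsupp.single Iα c - ch (Finsupp.single Iα c) ∈ ellSum k
  have key : ∀ K : MI N, ∀ c, Finsupp.single (setK Iα K) c - ch (Finsupp.single (setK Iα K) c)
      ∈ ellSum k := by
    intro K
    induction K using mi_ind with
    | h0 => intro c; simp [ch_single, setK_setK, setK_zero, DP_zero]
    | h1 i K ih =>
      intro c
      have h1 := ch_ell i (Finsupp.single (setK Iα K) c)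
      have h2 := ell_single i (setK Iα K) c
      rw [setK_setK, setK_zero] at h2
      rw [h2, map_add] at h1
      have : Finsupp.single (setK Iα (inc i K)) c - ch (Finsupp.single (setK Iα (inc i K)) c) =
          ell i (Finsupp.single (setK Iα K) c) - (Finsupp.single (setK Iα K) (dD i c) -
            ch (Finsupp.single (setK Iα K) (dD i c))) := by
        rw [h2, eq_neg_of_add_eq_zero_right h1]
        abel
      rw [this]
      exact Submodule.sub_mem _
        (ell_mem_ellSum i (Finsupp.single_mem_supported ℝ (s := dgGe k) c hI)) (ih _)
  simpa only [setK_self] using key (Iα.1 0) c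

theorem rl_mem {k : ℕ} {q : FData N n} (hq : q ∈ Fd k) : rl q ∈ Fk k := ⟨q, hq, rfl⟩

/-- An operator whose characteristic vanishes is a sum of total derivatives: integrate by parts in
each vertical degree and sum up. -/
theorem exists_total {q : ℕ → FData N n} (hq : ∀ k, q k ∈ Fd k) {w : U N n}
    (hw : SumsTo (fun k => rl (q k)) w) (h0 : SumsTo (fun k => rl (ch (q k))) 0) :
    ∃ y : Fin N → U N n, (∀ i, y i ∈ PL N n) ∧ w = ∑ i, oL i (y i) := by
  choose y hy h using fun k => mem_ellSum.1 (sub_ch_mem (hq k))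
  choose Y hY using fun i => exists_sumsTo (v := fun k => rl (y k i))
    fun k => Fk_anti (Nat.sub_le k 1) (rl_mem (hy k i))
  refine ⟨Y, fun i => ⟨_, fun k => rl_mem (hy k i), hY i⟩, SumsTo.unique hw ?_⟩
  have h1 : ∀ i, SumsTo (fun k => oL i (rl (y k i))) (oL i (Y i)) := fun i =>
    (hY i).map (fun k => rl_mem (hy k i)) _ (oL_cont i)
  have h2 : ∀ s : Finset (Fin N), SumsTo (fun k => ∑ i ∈ s, oL i (rl (y k i)))
      (∑ i ∈ s, oL i (Y i)) := by
    intro s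
    induction s using Finset.induction_on with
    | empty => exact fun M f _ => ⟨0, fun B _ => by simp⟩
    | insert a s ha ih =>
      simp only [Finset.sum_insert ha]
      exact (h1 a).add ih
  have h3 := (h2 Finset.univ).add h0
  rw [add_zero] at h3
  convert h3 using 2 with k
  rw [Pi.add_apply]
  simp only [← rl_ell]
  rw [← map_sum, h, ← map_add, sub_add_cancel]

theorem exists_family {w : U N n} (hw : w ∈ PL N n) :
    ∃ q : ℕ → FData N n, (∀ k, q k ∈ Fd k) ∧ SumsTo (fun k => rl (q k)) w := by
  obtain ⟨v, hv, h⟩ := hw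
  choose q hq e using hv
  exact ⟨q, hq, by simpa only [e] using h⟩

/-- A sum of total derivatives has coefficient data of characteristic zero. -/
theorem exists_family_total {y : Fin N → U N n} (hy : ∀ i, y i ∈ PL N n) :
    ∃ q : ℕ → FData N n, (∀ k, q k ∈ Fd k) ∧ SumsTo (fun k => rl (q k)) (∑ i, oL i (y i)) ∧
      ∀ k, ch (q k) = 0 := by
  choose q hq h using fun i => exists_family (hy i)
  refine ⟨fun k => ∑ i, ell i (q i k), fun k => Submodule.sum_mem _ fun i _ => ell_Fd i (hq i k),
    ?_, fun k => by simp [ch_ell]⟩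
  have h2 : ∀ s : Finset (Fin N), SumsTo (fun k => ∑ i ∈ s, oL i (rl (q i k)))
      (∑ i ∈ s, oL i (y i)) := by
    intro s
    induction s using Finset.induction_on with
    | empty => exact fun M f _ => ⟨0, fun B _ => by simp⟩
    | insert a s ha ih =>
      simp only [Finset.sum_insert ha]
      exact ((h a).map (fun k => rl_mem (hq a k)) _ (oL_cont a)).add ih
  simpa only [map_sum, rl_ell] using h2 Finset.univ

/-- The coefficient data of a locally finite family of finitely supported data. -/
noncomputable def asm (q : ℕ → FData N n) : OpData N n :=
  fun Iα => (∑ k ∈ Finset.range (dg Iα + 1), q k Iα : Loc N)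

omit [NeZero n] in
theorem Fd_apply {k : ℕ} {q : FData N n} (hq : q ∈ Fd k) {Iα : Idx N n} (h : dg Iα < k) :
    q Iα = 0 := by
  by_contra hc
  have : k ≤ dg Iα := hq (Finsupp.mem_support_iff.2 hc)
  omega

omit [NeZero n] in
theorem asm_eq {q : ℕ → FData N n} (hq : ∀ k, q k ∈ Fd k) {Iα : Idx N n} {B : ℕ}
    (hB : dg Iα < B) : asm q Iα = ((∑ k ∈ Finset.range B, q k) Iα : Loc N) := by
  rw [asm, Finsupp.finsetSum_apply]
  congr 1
  refine Finset.sum_subset (Finset.range_subset_range.2 hB) fun k _ hk => ?_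
  simp only [Finset.mem_range] at hk
  exact Fd_apply (hq k) (by omega)

omit [NeZero n] in
theorem asm_good {q : ℕ → FData N n} (hq : ∀ k, q k ∈ Fd k) : Good (asm q) := by
  refine ⟨fun Iα => Loc.prop _, fun m => ?_⟩
  refine (∑ k ∈ Finset.range (m + 1), q k).support.finite_toSet.subset ?_
  rintro Iα ⟨h1, h2⟩
  have h3 : dg Iα < m + 1 := Nat.lt_succ_of_le h2
  rw [asm_eq hq h3] at h1
  exact Finsupp.mem_support_iff.2 fun h => h1 (by rw [h]; rfl)

omit [NeZero n] in
/-- Every `Good` coefficient datum is a sum of finitely supported ones, one in each vertical degree. -/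
theorem exists_asm {Q : OpData N n} (hQ : Good Q) :
    ∃ q : ℕ → FData N n, (∀ k, q k ∈ Fd k) ∧ Q = asm q := by
  classical
  let q : ℕ → FData N n := fun k => Finsupp.onFinset (hQ.2 k).toFinset
    (fun Iα => if dg Iα = k then Loc.mk (Q Iα) (hQ.1 Iα) else 0) (by
      intro Iα h
      simp only [ne_eq, ite_eq_right_iff, Classical.not_imp] at h
      simp only [Set.Finite.mem_toFinset, Set.mem_ofPred_eq]
      exact ⟨fun h0 => h.2 (Loc.ext h0), h.1.le⟩)
  have hqa : ∀ k Iα, q k Iα = if dg Iα = k then Loc.mk (Q Iα) (hQ.1 Iα) else 0 := fun _ _ => rfl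
  refine ⟨q, fun k Iα h => ?_, funext fun Iα => ?_⟩
  · have : q k Iα ≠ 0 := Finsupp.mem_support_iff.1 h
    rw [hqa] at this
    simp only [ne_eq, ite_eq_right_iff, Classical.not_imp] at this
    exact this.1.ge
  · rw [asm]
    simp [hqa]

theorem val_prod {ι : Type*} (s : Finset ι) (g : ι → Loc N) (p : JetPt N) :
    ((∏ j ∈ s, g j : Loc N) : Fn N) p = ∏ j ∈ s, (g j : Fn N) p := by
  rw [← locVal_apply, map_prod, Finset.prod_apply]; rfl

theorem val_mul (a b : Loc N) (p : JetPt N) : ((a * b : Loc N) : Fn N) p = (a : Fn N) p * (b : Fn N) p :=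
  rfl

theorem monomial_eq (c : Loc N) (Iα : Idx N n) (f : Fin n → Loc N) (pt : JetPt N) :
    (c : Fn N) pt * DPow (Iα.1 0) (fun p => ∏ j,
      if j = (0 : Fin n) then UPow (Iα.2 j) (f j : Fn N) p
      else DPow (Iα.1 j) (UPow (Iα.2 j) (f j : Fn N)) p) pt = (el c Iα f : Fn N) pt := by
  have : (fun p => ∏ j, if j = (0 : Fin n) then UPow (Iα.2 j) (f j : Fn N) p
      else DPow (Iα.1 j) (UPow (Iα.2 j) (f j : Fn N)) p) =
      ((∏ j, slotP Iα j (f j) : Loc N) : Fn N) := by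
    funext p
    rw [val_prod]
    refine Finset.prod_congr rfl fun j _ => ?_
    rw [slotP]
    split_ifs
    · rw [UPow_coe]
    · rw [UPow_coe, DPow_coe]; rfl
  rw [this, DPow_coe, el, elG, val_mul]

/-- The operator with coefficient data `asm q` is the locally finite sum of the operators with data
`q k`. -/
theorem realizeP_asm {q : ℕ → FData N n} (hq : ∀ k, q k ∈ Fd k) {w : U N n}
    (hw : SumsTo (fun k => rl (q k)) w) (f : Fin n → Loc N) (pt : JetPt N) :
    realizeP (asm q) (fun j => (f j : Fn N)) pt = (w f : Fn N) pt := by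
  obtain ⟨M, hM⟩ := exists_tupM f
  set Q := ∑ k ∈ Finset.range (n * M + 1), q k with hQ
  have hterm : ∀ Iα, asm q Iα pt * DPow (Iα.1 0) (fun p => ∏ j,
      if j = (0 : Fin n) then UPow (Iα.2 j) (f j : Fn N) p
      else DPow (Iα.1 j) (UPow (Iα.2 j) (f j : Fn N)) p) pt = (el (Q Iα) Iα f : Fn N) pt := by
    intro Iα
    by_cases h : dg Iα < n * M + 1
    · rw [asm_eq hq h, monomial_eq]
    · have hz : ∀ c, el c Iα f = 0 := fun c =>
        Fk_vanish (k := dg Iα) (el_mem (s := dgGe (dg Iα)) (le_refl (dg Iα)) c) hM (by omega)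
      rw [asm, monomial_eq, hz, hz]
  rw [realizeP, tsum_congr hterm, tsum_eq_sum (s := Q.support)]
  · rw [hw.approx (fun k => rl_mem (hq k)) M _ (Nat.lt_succ_self _) f hM, ← map_sum,
      Nat.succ_eq_add_one, ← hQ, rl, Finsupp.lsum_apply, Finsupp.sum, Finset.sum_apply,
      ← locVal_apply (∑ _ ∈ _, _), map_sum, Finset.sum_apply]
    rfl
  · intro Iα hI
    rw [Finsupp.notMem_support_iff.1 hI, el, elG, zero_mul]
    rfl

/-- The sum over multi-indices in `chiData`, for finitely supported data. -/
theorem ch_hasSum (Q : FData N n) {Iα : Idx N n} (h : Iα.1 0 = 0) (pt : JetPt N) :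
    HasSum (fun K : MI N => (-1 : ℝ) ^ (∑ i, K i) * (DP K (Q (setK Iα K)) : Fn N) pt)
      ((ch Q Iα : Fn N) pt) := by
  induction Q using Finsupp.induction_linear with
  | zero => simp
  | add p q hp hq =>
    convert hp.add hq using 1
    · funext K
      rw [Finsupp.add_apply, map_add, ← mul_add]
      rfl
    · rw [map_add, Finsupp.add_apply]; rfl
  | single Jβ c =>
    rw [ch_single]
    by_cases hJ : setK Jβ 0 = Iα
    · subst hJ
      rw [Finsupp.single_eq_same]
      convert hasSum_single (Jβ.1 0) ?_ using 1
      · rw [setK_setK, setK_self, Finsupp.single_eq_same]; rfl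
      · intro K hK
        rw [setK_setK, Finsupp.single_eq_of_ne, map_zero]
        · simp
        · intro he
          apply hK
          rw [← he, setK_zero]
    · rw [Finsupp.single_eq_of_ne (Ne.symm hJ)]
      convert hasSum_zero using 1
      · funext K
        rw [Finsupp.single_eq_of_ne, map_zero]
        · simp
        · intro he
          apply hJ
          rw [← he, setK_setK, ← h, setK_self]
      · rfl

/-- The characteristic can be computed in each vertical degree separately. -/
theorem chiData_asm {q : ℕ → FData N n} (hq : ∀ k, q k ∈ Fd k) :
    chiData (asm q) = asm fun k => ch (q k) := by
  funext Iα
  rw [asm_eq (fun k => ch_Fd (hq k)) (Nat.lt_succ_self (dg Iα)), ← map_sum]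
  rw [chiData]
  split_ifs with h
  · funext pt
    rw [← (ch_hasSum _ h pt).tsum_eq]
    refine tsum_congr fun K => ?_
    have := asm_eq hq (Iα := setK Iα K) (B := (dg Iα).succ) (Nat.lt_succ_self (dg Iα))
    rw [setK] at this
    rw [this, DPow_coe, setK]
  · have : ∀ Q : FData N n, ch Q Iα = 0 := by
      intro Q
      induction Q using Finsupp.induction_linear with
      | zero => simp
      | add p q hp hq => rw [map_add, Finsupp.add_apply, hp, hq, add_zero]
      | single Jβ c =>
        rw [ch_single, Finsupp.single_eq_of_ne]
        rintro rfl
        exact h (setK_zero _ _)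
    rw [this]
    rfl

/-- `A` is the operator `w` on local functions. -/
def Models (A : Op N n) (w : U N n) : Prop :=
  ∀ (f : Fin n → Loc N) pt, A (fun j => (f j : Fn N)) pt = (w f : Fn N) pt

omit [NeZero n] in
theorem exists_lift {f : Fin n → Fn N} (hf : LocalTuple f) :
    ∃ g : Fin n → Loc N, f = fun j => (g j : Fn N) :=
  ⟨fun j => Loc.mk (f j) (hf j), rfl⟩

theorem isPLDO_iff {A : Op N n} : IsPLDO A ↔ ∃ w ∈ PL N n, Models A w := by
  constructor
  · rintro ⟨Q, hQ, hA⟩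
    obtain ⟨q, hq, rfl⟩ := exists_asm hQ
    obtain ⟨w, hw⟩ := exists_sumsTo (v := fun k => rl (q k))
      fun k => Fk_anti (Nat.sub_le k 1) (rl_mem (hq k))
    exact ⟨w, ⟨_, fun k => rl_mem (hq k), hw⟩, fun f pt =>
      (hA _ (fun j => (f j).prop) pt).trans (realizeP_asm hq hw f pt)⟩
  · rintro ⟨w, hw, hA⟩
    obtain ⟨q, hq, h⟩ := exists_family hw
    refine ⟨asm q, asm_good hq, fun f hf pt => ?_⟩
    obtain ⟨g, rfl⟩ := exists_lift hf
    rw [hA, realizeP_asm hq h]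

/-- The characteristic vanishes exactly on sums of total derivatives. -/
theorem chiZero_iff {A : Op N n} : ChiZero A ↔
    ∃ y : Fin N → U N n, (∀ i, y i ∈ PL N n) ∧ Models A (∑ i, oL i (y i)) := by
  constructor
  · rintro ⟨Q, hQ, hA, h0⟩
    obtain ⟨q, hq, rfl⟩ := exists_asm hQ
    obtain ⟨w, hw⟩ := exists_sumsTo (v := fun k => rl (q k))
      fun k => Fk_anti (Nat.sub_le k 1) (rl_mem (hq k))
    obtain ⟨w', hw'⟩ := exists_sumsTo (v := fun k => rl (ch (q k)))
      fun k => Fk_anti (Nat.sub_le k 1) (rl_mem (ch_Fd (hq k)))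
    have hz : w' = 0 := by
      funext f
      refine Loc.ext (funext fun pt => ?_)
      rw [← realizeP_asm (fun k => ch_Fd (hq k)) hw', ← chiData_asm hq, h0 _ fun j => (f j).prop]
      rfl
    subst hz
    obtain ⟨y, hy, rfl⟩ := exists_total hq hw hw'
    exact ⟨y, hy, fun f pt => (hA _ (fun j => (f j).prop) pt).trans (realizeP_asm hq hw f pt)⟩
  · rintro ⟨y, hy, hA⟩
    obtain ⟨q, hq, h, h0⟩ := exists_family_total hy
    refine ⟨asm q, asm_good hq, fun f hf pt => ?_, fun f hf pt => ?_⟩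
    · obtain ⟨g, rfl⟩ := exists_lift hf
      rw [hA, realizeP_asm hq h]
    · obtain ⟨g, rfl⟩ := exists_lift hf
      rw [chiData_asm hq, realizeP_asm (w := 0) (fun k => ch_Fd (hq k))
        (fun M f _ => ⟨0, fun B _ => by simp [h0]⟩)]
      rfl

end JetBundle

/-! ### The Koszul complex -/

namespace JetBundle
variable {N n : ℕ}

/-- Toggling the `i`-th entry. -/
def tog (i : Fin N) (δ : Fin N → Bool) : Fin N → Bool := Function.update δ i (!δ i)

/-- Toggling the `i`-th entry of the `j`-th word. -/
def togR (j : Fin n) (i : Fin N) (εs : Fin n → Fin N → Bool) : Fin n → Fin N → Bool :=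
  Function.update εs j (tog i (εs j))

theorem tog_same (i : Fin N) (δ : Fin N → Bool) : tog i δ i = !δ i := by simp [tog]

theorem tog_ne {i l : Fin N} (h : l ≠ i) (δ : Fin N → Bool) : tog i δ l = δ l := by simp [tog, h]

theorem tog_tog (i : Fin N) (δ : Fin N → Bool) : tog i (tog i δ) = δ := by simp [tog]

theorem tog_comm (i l : Fin N) (δ : Fin N → Bool) : tog i (tog l δ) = tog l (tog i δ) := by
  by_cases h : i = l
  · rw [h]
  · simp only [tog, Function.update_of_ne h, Function.update_of_ne (Ne.symm h)]
    exact Function.update_comm (Ne.symm h) _ _ _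

theorem togR_apply {j l : Fin n} {i k : Fin N} (h : (l, k) ≠ (j, i)) (ε : Fin n → Fin N → Bool) :
    togR j i ε l k = ε l k := by
  by_cases hl : l = j
  · subst hl
    have : k ≠ i := fun hk => h (by rw [hk])
    simp [togR, tog_ne this]
  · simp [togR, hl]

theorem togR_comm (j l : Fin n) (i k : Fin N) (ε : Fin n → Fin N → Bool) :
    togR j i (togR l k ε) = togR l k (togR j i ε) := by
  by_cases h : j = l
  · subst h
    simp only [togR, Function.update_self, Function.update_idem]
    rw [tog_comm]
  · simp only [togR, Function.update_of_ne h, Function.update_of_ne (Ne.symm h)]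
    exact Function.update_comm (Ne.symm h) _ _ _

theorem prod_update {ι B : Type*} [Fintype ι] [DecidableEq ι] (g : ι → B → ℝ) (x : ι → B) (l : ι)
    (b : B) (e : ℝ) (h : g l b = e * g l (x l)) :
    ∏ k, g k (Function.update x l b k) = e * ∏ k, g k (x k) := by
  rw [← Finset.mul_prod_erase _ _ (Finset.mem_univ l),
    ← Finset.mul_prod_erase _ (fun k => g k (x k)) (Finset.mem_univ l), Function.update_self, h,
    mul_assoc]
  congr 2
  refine Finset.prod_congr rfl fun k hk => ?_
  rw [Function.update_of_ne (Finset.ne_of_mem_erase hk)]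

/-- The sign of `dx^i` in the Koszul differential. -/
def sg (i : Fin N) (δ : Fin N → Bool) : ℝ := (-1) ^ pos i δ

/-- The sign of the `i`-th entry of the `j`-th word, the words being concatenated. -/
def sR (j : Fin n) (i : Fin N) (εs : Fin n → Fin N → Bool) : ℝ :=
  (-1) ^ ((∑ l ∈ Finset.univ.filter fun l => l < j, wt (εs l)) + pos i (εs j))

theorem sg_prod (i : Fin N) (δ : Fin N → Bool) :
    sg i δ = ∏ l, if l < i ∧ δ l then (-1 : ℝ) else 1 := by
  rw [sg, pos, ← Finset.prod_pow_eq_pow_sum]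
  exact Finset.prod_congr rfl fun l _ => by split_ifs <;> simp

theorem sg_tog (i l : Fin N) (δ : Fin N → Bool) :
    sg i (tog l δ) = (if l < i then -1 else 1) * sg i δ := by
  rw [sg_prod, sg_prod, tog]
  refine prod_update (fun k b => if k < i ∧ b = true then (-1 : ℝ) else 1) δ l _ _ ?_
  cases δ l <;> by_cases h : l < i <;> simp [h]

theorem neg_one_pow_wt_tog (i : Fin N) (δ : Fin N → Bool) :
    (-1 : ℝ) ^ wt (tog i δ) = -1 * (-1) ^ wt δ := by
  rw [wt, wt, ← Finset.prod_pow_eq_pow_sum, ← Finset.prod_pow_eq_pow_sum, tog]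
  refine prod_update (fun k b => (-1 : ℝ) ^ (if b = true then 1 else 0)) δ i _ _ ?_
  cases δ i <;> simp

theorem sR_prod (j : Fin n) (i : Fin N) (ε : Fin n → Fin N → Bool) : sR j i ε =
    ∏ l, if l < j then (-1 : ℝ) ^ wt (ε l) else if l = j then sg i (ε l) else 1 := by
  rw [sR, pow_add, ← Finset.prod_pow_eq_pow_sum, Finset.prod_filter]
  have : (-1 : ℝ) ^ pos i (ε j) = ∏ l, if l = j then sg i (ε l) else 1 := by
    rw [Finset.prod_ite_eq' Finset.univ j, if_pos (Finset.mem_univ _), sg]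
  rw [this, ← Finset.prod_mul_distrib]
  refine Finset.prod_congr rfl fun l _ => ?_
  split_ifs with h1 h2 <;> simp_all

theorem sR_tog (j l : Fin n) (i k : Fin N) (ε : Fin n → Fin N → Bool) :
    sR j i (togR l k ε) = (if l < j ∨ l = j ∧ k < i then -1 else 1) * sR j i ε := by
  rw [sR_prod, sR_prod, togR]
  refine prod_update (fun l x => if l < j then (-1 : ℝ) ^ wt x else
    if l = j then sg i x else 1) ε l _ _ ?_
  by_cases h1 : l < j
  · simp only [h1, true_or, if_true]
    exact neg_one_pow_wt_tog _ _
  · by_cases h2 : l = j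
    · simp only [h2, lt_irrefl, if_false, if_true, true_and, false_or]
      exact sg_tog _ _ _
    · simp [h1, h2]

theorem sg_mul_self (i : Fin N) (δ : Fin N → Bool) : sg i δ * sg i δ = 1 := by
  rw [sg, ← mul_pow]; simp

/-- Sign rule making the Koszul differential square to zero. -/
theorem sg_anti {i l : Fin N} (h : i ≠ l) (δ : Fin N → Bool) :
    sg i δ * sg l (tog i δ) = -(sg l δ * sg i (tog l δ)) := by
  rw [sg_tog, sg_tog]
  rcases lt_or_gt_of_ne h with h | h
  · simp [h, h.not_gt, mul_comm]
  · simp [h, h.not_gt, mul_comm]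

/-- Sign rule making the differential of the tensor power square to zero. -/
theorem sR_anti {j l : Fin n} {i k : Fin N} (h : (j, i) ≠ (l, k)) (ε : Fin n → Fin N → Bool) :
    sR j i ε * sR l k (togR j i ε) = -(sR l k ε * sR j i (togR l k ε)) := by
  rw [sR_tog, sR_tog]
  rcases lt_trichotomy j l with h1 | h1 | h1
  · simp [h1, h1.not_gt, h1.ne', mul_comm]
  · subst h1
    have : i ≠ k := fun hk => h (by rw [hk])
    rcases lt_or_gt_of_ne this with h | h
    · simp [h, h.not_gt, mul_comm]
    · simp [h, h.not_gt, mul_comm]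
  · simp [h1, h1.not_gt, h1.ne', mul_comm]

theorem sum_anti {ι V : Type*} [Fintype ι] [AddCommGroup V] [Module ℝ V] (f : ι → ι → V)
    (h : ∀ p q, f p q = -f q p) : ∑ p, ∑ q, f p q = 0 := by
  have h1 : ∑ p, ∑ q, f p q = -∑ p, ∑ q, f p q := by
    conv_lhs => rw [Finset.sum_comm]
    simp only [← Finset.sum_neg_distrib]
    exact Finset.sum_congr rfl fun p _ => Finset.sum_congr rfl fun q _ => h _ _
  have h2 : (2 : ℝ) • ∑ p, ∑ q, f p q = 0 := by
    rw [two_smul]; nth_rewrite 1 [h1]; exact neg_add_cancel _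
  exact (smul_eq_zero.1 h2).resolve_left two_ne_zero

section Koszul
variable {V : Type*} [AddCommGroup V] [Module ℝ V] (L : Fin N → V →ₗ[ℝ] V)

/-- The Koszul differential of commuting operators `L_i`. -/
def kd : ((Fin N → Bool) → V) →ₗ[ℝ] ((Fin N → Bool) → V) where
  toFun ω δ := ∑ i, if δ i then sg i δ • L i (ω (tog i δ)) else 0
  map_add' ω η := by
    funext δ
    simp only [Pi.add_apply, map_add, smul_add, ← Finset.sum_add_distrib]
    exact Finset.sum_congr rfl fun i _ => by split_ifs <;> simp
  map_smul' r ω := by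
    funext δ
    simp only [Pi.smul_apply, map_smul, RingHom.id_apply, Finset.smul_sum]
    exact Finset.sum_congr rfl fun i _ => by
      split_ifs
      · rw [smul_comm]
      · simp

theorem kd_apply (ω : (Fin N → Bool) → V) (δ : Fin N → Bool) :
    kd L ω δ = ∑ i, if δ i then sg i δ • L i (ω (tog i δ)) else 0 := rfl

variable {L}

theorem kd_kd (hL : ∀ i l v, L i (L l v) = L l (L i v)) (ω : (Fin N → Bool) → V) :
    kd L (kd L ω) = 0 := by
  funext δ
  simp only [kd_apply]
  have : ∀ i, (if δ i then sg i δ • L i (∑ l, if tog i δ l then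
      sg l (tog i δ) • L l (ω (tog l (tog i δ))) else 0) else 0) =
      ∑ l, if δ i ∧ tog i δ l then
        (sg i δ * sg l (tog i δ)) • L i (L l (ω (tog l (tog i δ)))) else 0 := by
    intro i
    by_cases h : δ i
    · simp only [h, if_true, true_and, map_sum, Finset.smul_sum]
      refine Finset.sum_congr rfl fun l _ => ?_
      split_ifs
      · rw [map_smul, smul_smul]
      · simp
    · simp [h]
  rw [Finset.sum_congr rfl fun i _ => this i]
  refine sum_anti _ fun i l => ?_
  by_cases h : i = l
  · subst h
    simp [tog_same]
  · rw [tog_ne h, tog_ne (Ne.symm h), sg_anti h, hL, tog_comm l i]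
    by_cases h1 : δ i = true <;> by_cases h2 : δ l = true <;> simp [h1, h2]

/-- The contracting homotopy in the direction `i`. -/
def kh (G : Fin N → V →ₗ[ℝ] V) (i : Fin N) (ω : (Fin N → Bool) → V) : (Fin N → Bool) → V :=
  fun δ => if δ i = false then sg i δ • G i (ω (tog i δ)) else 0

/-- On closed forms the homotopy in the direction `i` removes all terms without `dx^i`. -/
theorem kd_kh {G : Fin N → V →ₗ[ℝ] V} (hG : ∀ i v, G i (L i v) = v)
    (hGL : ∀ i l v, i ≠ l → G i (L l v) = L l (G i v)) (i : Fin N) {ω : (Fin N → Bool) → V}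
    (hω : kd L ω = 0) (δ : Fin N → Bool) (h : δ i = false ∨ ω δ = 0) :
    kd L (kh G i ω) δ = ω δ := by
  rw [kd_apply]
  by_cases hi : δ i = false
  · have h0 := congrArg (fun v => sg i δ • G i v) (congrFun hω (tog i δ))
    simp only [kd_apply, Pi.zero_apply, map_zero, smul_zero, map_sum, Finset.smul_sum] at h0
    refine (add_zero _).symm.trans ((congrArg _ h0.symm).trans ?_)
    rw [← Finset.sum_add_distrib, Finset.sum_eq_single i]
    · simp only [hi, tog_same, tog_tog, Bool.not_false, if_true, map_smul, hG, smul_smul, sg_tog,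
        lt_irrefl, if_false, one_mul, sg_mul_self, one_smul, Bool.false_eq_true, zero_add, kh]
    · intro l _ hl
      rw [tog_ne hl]
      by_cases hδ : δ l = true
      · simp only [hδ, if_true, kh, tog_ne (Ne.symm hl), hi, map_smul, smul_smul]
        rw [hGL i l _ (Ne.symm hl), tog_comm, sg_anti hl, neg_smul, neg_add_cancel]
      · simp [hδ]
    · simp
  · have hi' : δ i = true := by simpa using hi
    have h0 : ω δ = 0 := h.resolve_left hi
    rw [h0]
    refine Finset.sum_eq_zero fun l _ => ?_
    by_cases hl : l = i
    · subst hl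
      simp [kh, tog_same, tog_tog, h0]
    · simp [kh, tog_ne (Ne.symm hl), hi']

/-- Every closed form is exact up to a multiple of the top form: a primitive that is correct on all
words with an unset entry in `s` is obtained by applying the homotopies for `i ∈ s` successively. -/
theorem exists_top {G : Fin N → V →ₗ[ℝ] V} (hL : ∀ i l v, L i (L l v) = L l (L i v))
    (hG : ∀ i v, G i (L i v) = v)
    (hGL : ∀ i l v, i ≠ l → G i (L l v) = L l (G i v)) {ω : (Fin N → Bool) → V}
    (hω : kd L ω = 0) (s : Finset (Fin N)) :
    ∃ η, ∀ δ : Fin N → Bool, (∃ i ∈ s, δ i = false) → kd L η δ = ω δ := by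
  induction s using Finset.induction_on with
  | empty => exact ⟨0, by simp⟩
  | insert a s ha ih =>
    obtain ⟨η, h⟩ := ih
    have hc : kd L (ω - kd L η) = 0 := by rw [map_sub, hω, kd_kd hL, sub_zero]
    refine ⟨η + kh G a (ω - kd L η), fun δ hδ => ?_⟩
    rw [map_add, Pi.add_apply, kd_kh hG hGL a hc δ, Pi.sub_apply, add_sub_cancel]
    obtain ⟨i, hi, h0⟩ := hδ
    rcases Finset.mem_insert.1 hi with rfl | hi
    · exact Or.inl h0
    · right
      rw [Pi.sub_apply, h δ ⟨i, hi, h0⟩, sub_self]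

theorem wt_tog {i : Fin N} {δ : Fin N → Bool} (h : δ i = true) : wt (tog i δ) + 1 = wt δ := by
  rw [wt, wt, ← Finset.add_sum_erase _ _ (Finset.mem_univ i),
    ← Finset.add_sum_erase _ (fun l => if δ l = true then 1 else 0) (Finset.mem_univ i),
    tog_same, h]
  have : ∀ l ∈ Finset.univ.erase i, (if tog i δ l = true then 1 else 0) =
      if δ l = true then 1 else 0 := fun l hl => by rw [tog_ne (Finset.ne_of_mem_erase hl)]
  rw [Finset.sum_congr rfl this]
  simp [add_comm]

theorem wt_top : wt (fun _ : Fin N => true) = N := by simp [wt]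

theorem wt_eq {δ : Fin N → Bool} (h : wt δ = N) : δ = fun _ => true := by
  by_contra hc
  obtain ⟨i, hi⟩ := Function.ne_iff.1 hc
  have hi' : δ i = false := by simpa using hi
  have : wt δ < ∑ _i : Fin N, 1 := Finset.sum_lt_sum (fun l _ => by split_ifs <;> simp)
    ⟨i, Finset.mem_univ i, by simp [hi']⟩
  simp at this
  omega

variable (L) in
/-- The sums `Σ_i L_i y_i`. -/
def lrange : Submodule ℝ V :=
  LinearMap.range (∑ i, L i ∘ₗ (LinearMap.proj i : (Fin N → V) →ₗ[ℝ] V))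

theorem mem_lrange {v : V} : v ∈ lrange L ↔ ∃ y : Fin N → V, ∑ i, L i (y i) = v := by
  simp [lrange]

theorem L_mem_lrange (i : Fin N) (v : V) : L i v ∈ lrange L := by
  refine mem_lrange.2 ⟨Pi.single i v, ?_⟩
  rw [Finset.sum_eq_single i (fun l _ hl => by simp [hl]) (by simp)]
  simp

/-- A closed form whose top coefficient is a sum of total derivatives is exact. -/
theorem koszul_exact {G : Fin N → V →ₗ[ℝ] V} (hL : ∀ i l v, L i (L l v) = L l (L i v))
    (hG : ∀ i v, G i (L i v) = v)
    (hGL : ∀ i l v, i ≠ l → G i (L l v) = L l (G i v)) {ω : (Fin N → Bool) → V}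
    (hω : kd L ω = 0) (ht : ω (fun _ => true) ∈ lrange L) : ∃ η, kd L η = ω := by
  obtain ⟨η, h⟩ := exists_top hL hG hGL hω Finset.univ
  have h1 : ω (fun _ => true) - kd L η (fun _ => true) ∈ lrange L := by
    refine Submodule.sub_mem _ ht ?_
    rw [kd_apply]
    refine Submodule.sum_mem _ fun i _ => ?_
    rw [if_pos rfl]
    exact Submodule.smul_mem _ _ (L_mem_lrange i _)
  obtain ⟨y, hy⟩ := mem_lrange.1 h1
  have key : ∀ (i l : Fin N) (δ : Fin N → Bool), δ i = true →
      tog i δ = tog l (fun _ => true) → l = i ∧ δ = fun _ => true := by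
    intro i l δ hi he
    have hl : l = i := by
      by_contra hc
      have := congrFun he i
      rw [tog_same, tog_ne (Ne.symm hc), hi] at this
      simp at this
    subst hl
    exact ⟨rfl, by rw [← tog_tog l δ, he, tog_tog]⟩
  let ζ : (Fin N → Bool) → V := fun δ =>
    ∑ l, if δ = tog l (fun _ => true) then sg l (fun _ => true) • y l else 0
  refine ⟨η + ζ, ?_⟩
  funext δ
  rw [map_add, Pi.add_apply]
  by_cases hδ : δ = fun _ => true
  · subst hδ
    rw [sub_eq_iff_eq_add'.1 hy.symm, kd_apply L ζ]
    congr 1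
    refine Finset.sum_congr rfl fun i _ => ?_
    have : ζ (tog i fun _ => true) = sg i (fun _ => true) • y i := by
      refine (Finset.sum_eq_single i (fun l _ hl => if_neg fun he => hl (key i l _ rfl he).1)
        (by simp)).trans (if_pos rfl)
    rw [if_pos rfl, this, map_smul, smul_smul, sg_mul_self, one_smul]
  · have hz : kd L ζ δ = 0 := by
      rw [kd_apply]
      refine Finset.sum_eq_zero fun i _ => ?_
      split_ifs with hi
      · have : ζ (tog i δ) = 0 := Finset.sum_eq_zero fun l _ =>
          if_neg fun he => hδ (key i l δ hi he).2
        rw [this, map_zero, smul_zero]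
      · rfl
    rw [hz, add_zero]
    obtain ⟨i, hi⟩ := Function.ne_iff.1 hδ
    exact h δ ⟨i, Finset.mem_univ i, by simpa using hi⟩

/-- Exactness in a fixed degree: a closed form concentrated in form degree `N - s` has a primitive
concentrated in form degree `N - s - 1`. -/
theorem koszul_exact_graded {G : Fin N → V →ₗ[ℝ] V} (hL : ∀ i l v, L i (L l v) = L l (L i v))
    (hG : ∀ i v, G i (L i v) = v)
    (hGL : ∀ i l v, i ≠ l → G i (L l v) = L l (G i v)) {ω : (Fin N → Bool) → V}
    (hω : kd L ω = 0) (ht : ω (fun _ => true) ∈ lrange L) {s : ℕ}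
    (hs : ∀ δ, ω δ ≠ 0 → wt δ + s = N) :
    ∃ η, kd L η = ω ∧ ∀ δ, η δ ≠ 0 → wt δ + (s + 1) = N := by
  obtain ⟨η, h⟩ := koszul_exact hL hG hGL hω ht
  refine ⟨fun δ => if wt δ + (s + 1) = N then η δ else 0, ?_, fun δ hδ => ?_⟩
  · funext δ
    by_cases hw : wt δ + s = N
    · rw [← h, kd_apply, kd_apply]
      refine Finset.sum_congr rfl fun i _ => ?_
      split_ifs with h1 h2
      · rfl
      · exact absurd (by have := wt_tog h1; omega) h2
      · rfl
    · rw [not_imp_comm.1 (hs δ) hw, kd_apply]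
      refine Finset.sum_eq_zero fun i _ => ?_
      split_ifs with h1 h2
      · exact absurd (by have := wt_tog h1; omega) hw
      · simp
      · rfl
  · by_contra hc
    exact hδ (if_neg hc)

end Koszul
end JetBundle

/-! ### Extension to chain maps -/

namespace JetBundle
variable {N n : ℕ}

/-- The regraded degree `Σ_j (N − |ε_j|)` of a tuple of words: the number of unset entries. -/
def gr (ε : Fin n → Fin N → Bool) : ℕ := ∑ j, ∑ i, if ε j i = false then 1 else 0

theorem wt_add (δ : Fin N → Bool) : wt δ + (∑ i, if δ i = false then 1 else 0) = N := by
  rw [wt, ← Finset.sum_add_distrib]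
  calc _ = ∑ _i : Fin N, 1 := Finset.sum_congr rfl fun i _ => by cases δ i <;> simp
    _ = N := by simp

theorem gr_cast (ε : Fin n → Fin N → Bool) :
    (gr ε : ℤ) = ∑ j, ((N : ℤ) - (wt (ε j) : ℤ)) := by
  rw [gr, Nat.cast_sum]
  refine Finset.sum_congr rfl fun j _ => ?_
  have := wt_add (ε j)
  omega

theorem gr_togR {j : Fin n} {i : Fin N} {ε : Fin n → Fin N → Bool} (h : ε j i = false) :
    gr (togR j i ε) + 1 = gr ε := by
  have h1 := gr_cast (togR j i ε)
  have h2 := gr_cast ε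
  rw [← Finset.add_sum_erase _ _ (Finset.mem_univ j)] at h1 h2
  have h3 : ∀ l ∈ Finset.univ.erase j, ((N : ℤ) - (wt (togR j i ε l) : ℤ)) =
      (N : ℤ) - (wt (ε l) : ℤ) := fun l hl => by
    rw [togR, Function.update_of_ne (Finset.ne_of_mem_erase hl)]
  rw [Finset.sum_congr rfl h3] at h1
  have h4 := wt_tog (i := i) (δ := tog i (ε j)) (by rw [tog_same, h]; rfl)
  rw [tog_tog] at h4
  rw [togR, Function.update_self] at h1
  change (gr (togR j i ε) : ℤ) = _ at h1
  omega

theorem gr_zero {ε : Fin n → Fin N → Bool} (h : gr ε = 0) : ε = fun _ _ => true := by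
  funext j i
  have h1 := (Finset.sum_eq_zero_iff.1 h) j (Finset.mem_univ j)
  have h2 := (Finset.sum_eq_zero_iff.1 h1) i (Finset.mem_univ i)
  simpa using h2

theorem gr_le (ε : Fin n → Fin N → Bool) : gr ε ≤ n * N := by
  calc gr ε ≤ ∑ _j : Fin n, ∑ _i : Fin N, 1 :=
        Finset.sum_le_sum fun j _ => Finset.sum_le_sum fun i _ => by split_ifs <;> simp
    _ = n * N := by simp

section
variable {V : Type*} [AddCommGroup V] [Module ℝ V] (R : Fin N → Fin n → V →ₗ[ℝ] V)

/-- Precomposition with the horizontal differential of the tensor power. -/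
def rd (F : (Fin n → Fin N → Bool) → V) (ε : Fin n → Fin N → Bool) : V :=
  ∑ p : Fin n × Fin N,
    if ε p.1 p.2 = false then sR p.1 p.2 ε • R p.2 p.1 (F (togR p.1 p.2 ε)) else 0

variable {R}

theorem rd_rd (hR : ∀ i j k l v, R i j (R k l v) = R k l (R i j v))
    (F : (Fin n → Fin N → Bool) → V) (ε : Fin n → Fin N → Bool) : rd R (rd R F) ε = 0 := by
  unfold rd
  have : ∀ p : Fin n × Fin N, (if ε p.1 p.2 = false then sR p.1 p.2 ε • R p.2 p.1
      (∑ q : Fin n × Fin N, if togR p.1 p.2 ε q.1 q.2 = false then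
        sR q.1 q.2 (togR p.1 p.2 ε) • R q.2 q.1 (F (togR q.1 q.2 (togR p.1 p.2 ε))) else 0)
        else 0) =
      ∑ q : Fin n × Fin N, if ε p.1 p.2 = false ∧ togR p.1 p.2 ε q.1 q.2 = false then
        (sR p.1 p.2 ε * sR q.1 q.2 (togR p.1 p.2 ε)) •
          R p.2 p.1 (R q.2 q.1 (F (togR q.1 q.2 (togR p.1 p.2 ε)))) else 0 := by
    intro p
    by_cases h : ε p.1 p.2 = false
    · simp only [h, if_true, true_and, map_sum, Finset.smul_sum]
      refine Finset.sum_congr rfl fun l _ => ?_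
      split_ifs
      · rw [map_smul, smul_smul]
      · simp
    · simp [h]
  rw [Finset.sum_congr rfl fun p _ => this p]
  refine sum_anti _ fun p q => ?_
  by_cases h : p = q
  · subst h
    by_cases h1 : ε p.1 p.2 = false <;> simp [togR, tog_same, h1]
  · rw [togR_apply (Ne.symm h), togR_apply h, sR_anti h, hR, togR_comm q.1 p.1]
    by_cases h1 : ε p.1 p.2 = false <;> by_cases h2 : ε q.1 q.2 = false <;> simp [h1, h2]

/-- The operators `L_i` commute with precomposition by the differential of the tensor power. -/
theorem kd_rd {L : Fin N → V →ₗ[ℝ] V} (hLR : ∀ i k l v, L i (R k l v) = R k l (L i v))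
    (F : (Fin n → Fin N → Bool) → (Fin N → Bool) → V) (ε : Fin n → Fin N → Bool)
    (δ : Fin N → Bool) : kd L (fun δ => rd R (fun ε => F ε δ) ε) δ =
      rd R (fun ε => kd L (F ε) δ) ε := by
  unfold rd
  simp only [kd_apply]
  have h1 : ∀ i, (if δ i then sg i δ • L i (∑ p : Fin n × Fin N, if ε p.1 p.2 = false then
      sR p.1 p.2 ε • R p.2 p.1 (F (togR p.1 p.2 ε) (tog i δ)) else 0) else 0) =
      ∑ p : Fin n × Fin N, if ε p.1 p.2 = false then sR p.1 p.2 ε • R p.2 p.1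
        (if δ i then sg i δ • L i (F (togR p.1 p.2 ε) (tog i δ)) else 0) else 0 := by
    intro i
    by_cases h : δ i = true
    · simp only [h, if_true, map_sum, Finset.smul_sum]
      refine Finset.sum_congr rfl fun p _ => ?_
      split_ifs
      · rw [map_smul, map_smul, hLR, smul_comm]
      · simp
    · simp [h]
  rw [Finset.sum_congr rfl fun i _ => h1 i, Finset.sum_comm]
  refine Finset.sum_congr rfl fun p _ => ?_
  split_ifs
  · rw [map_sum, Finset.smul_sum]
  · simp

theorem rd_congr {F F' : (Fin n → Fin N → Bool) → V} {ε : Fin n → Fin N → Bool}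
    (h : ∀ ε', gr ε' + 1 = gr ε → F ε' = F' ε') : rd R F ε = rd R F' ε := by
  refine Finset.sum_congr rfl fun p _ => ?_
  split_ifs with h1
  · rw [h _ (gr_togR h1)]
  · rfl

/-- A degree zero component `a` with `a ∘ d/dx^i_j` a sum of total derivatives for all `i`, `j`
extends to a chain map in degrees up to `s`. Given `F` in degrees up to `s`, the composition `F ∘ d_H`
is closed, hence exact by `koszul_exact_graded`; only for `s = 0` is it a top form, and there the
condition on `a` is needed. -/
theorem exists_chain {L G : Fin N → V →ₗ[ℝ] V} (hL : ∀ i l v, L i (L l v) = L l (L i v))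
    (hG : ∀ i v, G i (L i v) = v)
    (hGL : ∀ i l v, i ≠ l → G i (L l v) = L l (G i v))
    (hR : ∀ i j k l v, R i j (R k l v) = R k l (R i j v))
    (hLR : ∀ i k l v, L i (R k l v) = R k l (L i v)) (a : V) (ha : ∀ i j, R i j a ∈ lrange L)
    (s : ℕ) : ∃ F : (Fin n → Fin N → Bool) → (Fin N → Bool) → V,
      F (fun _ _ => true) (fun _ => true) = a ∧
      (∀ ε δ, F ε δ ≠ 0 → wt δ + gr ε = N) ∧
      ∀ ε, gr ε ≤ s → ∀ δ, kd L (F ε) δ = rd R (fun ε => F ε δ) ε := by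
  classical
  induction s with
  | zero =>
    refine ⟨fun ε δ => if ε = (fun _ _ => true) ∧ δ = (fun _ => true) then a else 0, ?_, ?_, ?_⟩
    · simp
    · intro ε δ h
      have h1 : ε = (fun _ _ => true) ∧ δ = (fun _ => true) := by
        by_contra hc; exact h (if_neg hc)
      rw [h1.1, h1.2, wt_top]
      simp [gr]
    · intro ε hε δ
      have := gr_zero (Nat.le_zero.1 hε)
      subst this
      rw [kd_apply]
      trans 0
      · refine Finset.sum_eq_zero fun i _ => ?_
        split_ifs with h1
        · have h2 : tog i δ ≠ fun _ => true := fun h => by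
            have := congrFun h i
            simp [tog_same, h1] at this
          simp [h2]
        · rfl
      · refine (Finset.sum_eq_zero fun p _ => ?_).symm
        simp
  | succ s ih =>
    obtain ⟨F, h0, hF, hc⟩ := ih
    have step : ∀ ε : Fin n → Fin N → Bool, gr ε = s + 1 → ∃ η,
        kd L η = (fun δ => rd R (fun ε => F ε δ) ε) ∧ ∀ δ, η δ ≠ 0 → wt δ + (s + 1) = N := by
      intro ε hε
      have hs : ∀ δ, rd R (fun ε => F ε δ) ε ≠ 0 → wt δ + s = N := by
        intro δ hδ
        by_contra hw
        refine hδ (Finset.sum_eq_zero fun p _ => ?_)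
        split_ifs with h1
        · have h2 := gr_togR h1
          have h3 : F (togR p.1 p.2 ε) δ = 0 := by
            by_contra h4
            have := hF _ _ h4
            omega
          simp [h3]
        · rfl
      refine koszul_exact_graded hL hG hGL ?_ ?_ hs
      · funext δ
        rw [kd_rd hLR, Pi.zero_apply, ← rd_rd hR (fun ε => F ε δ) ε]
        exact rd_congr fun ε' h => hc ε' (by omega) δ
      · rcases Nat.eq_zero_or_pos s with rfl | hpos
        · refine Submodule.sum_mem _ fun p _ => ?_
          split_ifs with h1
          · have h2 := gr_togR h1
            rw [gr_zero (by omega : gr (togR p.1 p.2 ε) = 0)]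
            beta_reduce
            rw [h0]
            exact Submodule.smul_mem _ _ (ha _ _)
          · exact Submodule.zero_mem _
        · have : rd R (fun ε => F ε fun _ => true) ε = 0 := by
            by_contra h
            have := hs _ h
            rw [wt_top] at this
            omega
          rw [this]
          exact Submodule.zero_mem _
    choose! η hη hw using step
    have hlow : ∀ ε δ, gr ε ≤ s → (if gr ε = s + 1 then η ε δ else F ε δ) = F ε δ :=
      fun ε δ h => if_neg (by omega)
    refine ⟨fun ε δ => if gr ε = s + 1 then η ε δ else F ε δ, ?_, ?_, ?_⟩
    · exact (hlow _ _ (by simp [gr])).trans h0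
    · intro ε δ h
      dsimp only at h
      split_ifs at h with h1
      · rw [h1]; exact hw ε h1 δ h
      · exact hF ε δ h
    · intro ε hε δ
      rw [rd_congr (F' := fun ε => F ε δ) fun ε' h => hlow ε' δ (by omega)]
      by_cases h1 : gr ε = s + 1
      · simp only [h1, if_true]
        rw [hη ε h1]
      · simp only [h1, if_false]
        exact hc ε (by omega) δ

end
end JetBundle

/-! ### Matrices of operators on the jet bundle -/

namespace JetBundle
variable {N n : ℕ} [NeZero n]

/-- The total derivative composed with operators, on `LDO(n)`. -/
noncomputable def pL (i : Fin N) : PL N n →ₗ[ℝ] PL N n :=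
  (oL i).restrict fun _ hw => oL_PL i hw

/-- Precomposition with a total derivative, on `LDO(n)`. -/
noncomputable def pR (i : Fin N) (j : Fin n) : PL N n →ₗ[ℝ] PL N n :=
  (oR i j).restrict fun _ hw => oR_PL i j hw

/-- The left inverse `oG i` of `pL i`, on `LDO(n)`. -/
noncomputable def pG (i : Fin N) : PL N n →ₗ[ℝ] PL N n where
  toFun w := ⟨oG i w, oG_PL i w.2⟩
  map_add' v w := Subtype.ext (oG_add i v.2 w.2)
  map_smul' r w := Subtype.ext (oG_smul i r w.1)

omit [NeZero n] in
theorem update_coe (f : Fin n → Loc N) (i : Fin N) (j : Fin n) :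
    Function.update (fun l => (f l : Fn N)) j (Dtot i (f j : Fn N)) =
      fun l => (Function.update f j (dD i (f j)) l : Fn N) := by
  funext l
  by_cases h : l = j
  · subst h; simp only [Function.update_self]; rfl
  · simp [h]

omit [NeZero n] in
theorem Models.precomp {A : Op N n} {w : U N n} (h : Models A w) (i : Fin N) (j : Fin n) :
    Models (precompD A i j) (oR i j w) := by
  intro f pt
  rw [precompD, update_coe, h]
  rfl

omit [NeZero n] in
theorem Models.unique {A : Op N n} {v w : U N n} (hv : Models A v) (hw : Models A w) : v = w := by
  funext f
  exact Loc.ext (funext fun pt => (hv f pt).symm.trans (hw f pt))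

open Classical in
/-- The operator `v`, extended by zero to non-local arguments. -/
noncomputable def toOp (v : U N n) : Op N n := fun f =>
  if h : LocalTuple f then (v fun j => Loc.mk (f j) (h j) : Fn N) else 0

omit [NeZero n] in
theorem toOp_models (v : U N n) : Models (toOp v) v := by
  intro f pt
  rw [toOp, dif_pos (show LocalTuple fun j => (f j : Fn N) from fun j => (f j).prop)]
  rfl

omit [NeZero n] in
theorem toOp_zero : toOp (0 : U N n) = 0 := by
  funext f
  rw [toOp]
  split_ifs <;> rfl

/-- Evaluation of operators at a tuple of local functions and a point. -/
noncomputable def ev (f : Fin n → Loc N) (pt : JetPt N) : PL N n →ₗ[ℝ] ℝ where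
  toFun v := (v.1 f : Fn N) pt
  map_add' _ _ := rfl
  map_smul' _ _ := rfl

theorem ev_apply (f : Fin n → Loc N) (pt : JetPt N) (v : PL N n) :
    ev f pt v = (v.1 f : Fn N) pt := rfl

/-- On the matrix of operators given by `F`, the differential of `DEnd_0(n)` compares the Koszul
differential of `F` with precomposition with `d_H`. -/
theorem deltaMat_eval (F : (Fin n → Fin N → Bool) → (Fin N → Bool) → PL N n) {M : DMat N n}
    (hM : ∀ ε δ, Models (M ε δ) (F ε δ).1) (ε : Fin n → Fin N → Bool) (δ : Fin N → Bool)
    (f : Fin n → Loc N) (pt : JetPt N) :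
    deltaMat 0 M ε δ (fun j => (f j : Fn N)) pt =
      ev f pt (kd pL (F ε) δ) - ev f pt (rd pR (fun ε => F ε δ) ε) := by
  have hM' : ∀ ε δ (f : Fin n → Loc N), M ε δ (fun j => (f j : Fn N)) = ((F ε δ).1 f : Fn N) :=
    fun ε δ f => funext fun pt => hM ε δ f pt
  rw [deltaMat, zpow_zero, one_smul, Pi.sub_apply, kd_apply, rd, map_sum, map_sum,
    Fintype.sum_prod_type]
  congr 1
  · refine Finset.sum_congr rfl fun i _ => ?_
    split_ifs with h
    · rw [map_smul, hM', tog, h]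
      rfl
    · rw [map_zero]
  · refine Finset.sum_congr rfl fun j _ => Finset.sum_congr rfl fun i _ => ?_
    split_ifs with h
    · rw [map_smul, update_coe, hM', togR, tog, h]
      rfl
    · rw [map_zero]

/-- If `χ(A ∘ d/dx^i_j) = 0`, then `A ∘ d/dx^i_j` is a sum of total derivatives. -/
theorem exists_lrange_of_chiZero {A : Op N n} {w : PL N n} (hA : Models A w.1)
    {i : Fin N} {j : Fin n} (h : ChiZero (precompD A i j)) : pR i j w ∈ lrange pL := by
  obtain ⟨y, hy, hm⟩ := chiZero_iff.1 h
  refine mem_lrange.2 ⟨fun l => ⟨y l, hy l⟩, Subtype.ext ?_⟩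
  rw [Submodule.coe_sum]
  exact hm.unique (hA.precomp i j)

/-- If `A ∘ d/dx^i_j` is a sum of total derivatives, its characteristic vanishes. -/
theorem chiZero_of_lrange {A : Op N n} {w : PL N n} (hA : Models A w.1)
    {i : Fin N} {j : Fin n} (h : pR i j w ∈ lrange pL) : ChiZero (precompD A i j) := by
  obtain ⟨y, hy⟩ := mem_lrange.1 h
  refine chiZero_iff.2 ⟨fun l => (y l).1, fun l => (y l).2, ?_⟩
  have h1 : ∑ l, oL l (y l).1 = oR i j w.1 := by
    have := congrArg Subtype.val hy
    rw [Submodule.coe_sum] at this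
    exact this
  rw [h1]
  exact hA.precomp i j

/-- For a chain map `F`, the equation `d_H F_1 = F_0 d_H` at the word where only `dx^i` in the `j`-th
factor is missing exhibits `F_0 ∘ d/dx^i_j` as a sum of total derivatives. -/
theorem pR_mem_of_chain {F : (Fin n → Fin N → Bool) → (Fin N → Bool) → PL N n}
    (h : ∀ ε δ, kd pL (F ε) δ = rd pR (fun ε => F ε δ) ε) (i : Fin N) (j : Fin n) :
    pR i j (F (fun _ _ => true) fun _ => true) ∈ lrange pL := by
  set ε : Fin n → Fin N → Bool := togR j i fun _ _ => true with hε
  have hji : ε j i = false := by simp [hε, togR, tog_same]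
  have hr : rd pR (fun ε => F ε fun _ => true) ε =
      sR j i ε • pR i j (F (fun _ _ => true) fun _ => true) := by
    rw [rd, Finset.sum_eq_single (j, i)]
    · rw [if_pos hji]
      have : togR j i ε = fun _ _ => true := by simp [hε, togR, tog_tog]
      rw [this]
    · intro p _ hp
      rw [if_neg]
      have := togR_apply (j := j) (i := i) (l := p.1) (k := p.2) hp fun _ _ => true
      rw [hε, this]
      simp
    · simp
  have hk : kd pL (F ε) (fun _ => true) ∈ lrange (pL (N := N) (n := n)) := by
    rw [kd_apply]
    refine Submodule.sum_mem _ fun l _ => ?_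
    rw [if_pos rfl]
    exact Submodule.smul_mem _ _ (L_mem_lrange l _)
  rw [h, hr] at hk
  have hs : sR j i ε ≠ 0 := pow_ne_zero _ (by norm_num)
  exact (Submodule.smul_mem_iff _ hs).1 hk

theorem pL_comm (i l : Fin N) (v : PL N n) : pL i (pL l v) = pL l (pL i v) :=
  Subtype.ext (LinearMap.congr_fun (oL_comm i l) v.1)

theorem pL_pR (i k : Fin N) (l : Fin n) (v : PL N n) : pL i (pR k l v) = pR k l (pL i v) :=
  Subtype.ext (LinearMap.congr_fun (oL_oR i k l) v.1)

theorem pR_comm (i : Fin N) (j : Fin n) (k : Fin N) (l : Fin n) (v : PL N n) :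
    pR i j (pR k l v) = pR k l (pR i j v) :=
  Subtype.ext (LinearMap.congr_fun (oR_comm i k j l) v.1)

theorem pG_pL (i : Fin N) (v : PL N n) : pG i (pL i v) = v :=
  Subtype.ext (oG_oL_self i v.2)

theorem pG_pL_ne (i l : Fin N) (v : PL N n) (h : i ≠ l) : pG i (pL l v) = pL l (pG i v) :=
  Subtype.ext (oG_oL h v.2)

end JetBundle

namespace JetBundle

/-- `B_0` maps the `0`-cycles of `DEnd_*(n)` onto the kernel of `a_0`:
`B_0(Z_0(DEnd(n))) = {A ∈ LDO(n) : χ(A ∘ d/dx^i_j) = 0 for all i, j}` (both inclusions). -/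
theorem B0_cycles_onto_ker_a0 {N n : ℕ} [NeZero n] :
    (∀ F : DMat N n, LDOMat F → GradedMat 0 F → MatZeroLoc (deltaMat 0 F) →
        ∀ (i : Fin N) (j : Fin n), ChiZero (precompD (B0 F) i j)) ∧
    (∀ A : Op N n, IsPLDO A → (∀ (i : Fin N) (j : Fin n), ChiZero (precompD A i j)) →
        ∃ F : DMat N n, LDOMat F ∧ GradedMat 0 F ∧ MatZeroLoc (deltaMat 0 F) ∧
          ∀ g, LocalTuple g → ∀ pt, B0 F g pt = A g pt) := by
  constructor
  · intro M hM _ h0 i j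
    choose w hw hm using fun ε δ => isPLDO_iff.1 (hM ε δ)
    refine chiZero_of_lrange (w := ⟨_, hw _ _⟩) (hm _ _) (pR_mem_of_chain
      (F := fun ε δ => ⟨w ε δ, hw ε δ⟩) (fun ε δ => Subtype.ext (funext fun f =>
        Loc.ext (funext fun pt => ?_))) i j)
    have := deltaMat_eval (fun ε δ => ⟨w ε δ, hw ε δ⟩) hm ε δ f pt
    rw [h0 ε δ _ fun j => (f j).prop] at this
    exact sub_eq_zero.1 this.symm
  · intro A hA h
    obtain ⟨w, hw, hm⟩ := isPLDO_iff.1 hA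
    obtain ⟨F, hF0, hFg, hFc⟩ := exists_chain (R := pR) (L := pL) (G := pG) pL_comm pG_pL pG_pL_ne
      pR_comm pL_pR ⟨w, hw⟩ (fun i j => exists_lrange_of_chiZero hm (h i j)) (n * N)
    refine ⟨fun ε δ => toOp (F ε δ).1, fun ε δ => isPLDO_iff.2 ⟨_, (F ε δ).2, toOp_models _⟩,
      fun ε δ hne => ?_, fun ε δ g hg pt => ?_, fun g hg pt => ?_⟩
    · have h1 : F ε δ ≠ 0 := fun h0 => hne (by
        beta_reduce
        rw [h0]
        exact toOp_zero)
      have h2 := hFg ε δ h1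
      have h3 := gr_cast ε
      omega
    · obtain ⟨f, rfl⟩ := exists_lift hg
      rw [deltaMat_eval F (fun ε δ => toOp_models _), hFc ε (gr_le ε) δ, sub_self]
    · obtain ⟨f, rfl⟩ := exists_lift hg
      rw [B0, toOp_models, hF0, hm]

end JetBundle
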